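/- arXiv:0812.0372 — 2 statements merged into one kernel-verified Lean document; each statement's English description precedes it below -/
import Mathlib

section
/- Let D ≥ 3 and let G be a finite simple graph with maximum degree at most D that contains no clique on D+1 vertices. Then for every integer c ≥ 2, G admits a proper vertex coloring with D colors that is (c,p)-nondegenerate, where p = (c³ + 8c² + 19c + 6)(c+1). -/
/-! Split the `D` colours into `c + 1` classes of nearly equal size. Starting from a Brooks
colouring, take a proper colouring of minimum total weight of the edges whose ends have colours of
the same class, where an edge inside a class weighs the inverse of the number of colours of that
class. Minimality bounds the number of neighbours of a vertex in its own class by the size of that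
class. Call the difference of the two the slack of the vertex: it also controls the number of
neighbours that miss at least two classes, since such neighbours could be moved to another class.

A vertex of large degree that sees fewer than `c` classes has many neighbours in a single class,
many of them of large slack or many of them of small slack. By a Hall-type argument each such vertex
can be assigned a small set of these neighbours in such a way that the sets hardly overlap. Each
class is then recoloured on its own with its own colours, so that no class seen before is lost.
Turning the sets of large slack into cliques keeps the degrees below the number of available colours
and forces these sets to be rainbow. On the sets of small slack enough distinct colours are produced
by an exchange argument: a maximum transversal that still falls short would support an alternating
structure growing forever. -/

namespace NondegenerateColoring

open Finset
open scoped Classical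

noncomputable section

section Greedy

variable {V α : Type*} {G : SimpleGraph V} {X Y Z : Finset V} {f : V → α} {u v w : V}

/-- The neighbours of `v` inside the finite set `Y`. -/
def nbrsIn (G : SimpleGraph V) (Y : Finset V) (v : V) : Finset V := {w ∈ Y | G.Adj v w}

@[simp]
theorem mem_nbrsIn : w ∈ nbrsIn G Y v ↔ w ∈ Y ∧ G.Adj v w := by
  simp [nbrsIn]

theorem nbrsIn_mono (hYZ : Y ⊆ Z) (v : V) : nbrsIn G Y v ⊆ nbrsIn G Z v :=
  filter_subset_filter _ hYZ

theorem card_nbrsIn_union (hXY : Disjoint X Y) (v : V) :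
    #(nbrsIn G (X ∪ Y) v) = #(nbrsIn G X v) + #(nbrsIn G Y v) := by
  rw [nbrsIn, filter_union, card_union_of_disjoint (disjoint_filter_filter hXY)]
  rfl

theorem card_nbrsIn_lt (hYZ : Y ⊆ Z) (hwZ : w ∈ Z) (hwY : w ∉ Y) (hvw : G.Adj v w) :
    #(nbrsIn G Y v) < #(nbrsIn G Z v) :=
  card_lt_card <| Finset.ssubset_iff_subset_ne.2 ⟨nbrsIn_mono hYZ v, fun h =>
    hwY (mem_nbrsIn.1 (h ▸ mem_nbrsIn.2 ⟨hwZ, hvw⟩)).1⟩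

theorem sum_card_nbrsIn_comm (G : SimpleGraph V) (X Y : Finset V) :
    ∑ x ∈ X, #(nbrsIn G Y x) = ∑ y ∈ Y, #(nbrsIn G X y) := by
  simp only [nbrsIn, card_filter]
  rw [sum_comm]
  simp only [G.adj_comm]

theorem exists_mem_forall_adj_ne {L : Finset α} (f : V → α) (h : #(nbrsIn G Y v) < #L) :
    ∃ a ∈ L, ∀ w ∈ Y, G.Adj v w → f w ≠ a := by
  obtain ⟨a, haL, ha⟩ := exists_mem_notMem_of_card_lt_card
    ((card_image_le (f := f)).trans_lt h)
  exact ⟨a, haL, fun w hw hvw hfw => ha (mem_image.2 ⟨w, mem_nbrsIn.2 ⟨hw, hvw⟩, hfw⟩)⟩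

/-- `f` is a proper colouring of the subgraph of `G` induced by `Y`. -/
def IsProperOn (G : SimpleGraph V) (Y : Finset V) (f : V → α) : Prop :=
  ∀ u ∈ Y, ∀ v ∈ Y, G.Adj u v → f u ≠ f v

theorem IsProperOn.mono (hf : IsProperOn G Z f) (hYZ : Y ⊆ Z) : IsProperOn G Y f :=
  fun u hu v hv => hf u (hYZ hu) v (hYZ hv)

theorem IsProperOn.congr {g : V → α} (hf : IsProperOn G Y f) (h : ∀ v ∈ Y, g v = f v) :
    IsProperOn G Y g := fun u hu v hv huv => by
  rw [h u hu, h v hv]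
  exact hf u hu v hv huv

theorem IsProperOn.update (hf : IsProperOn G (Y.erase v) f) {a : α}
    (ha : ∀ w ∈ Y, G.Adj v w → f w ≠ a) : IsProperOn G Y (Function.update f v a) := by
  intro x hx y hy hxy
  rcases eq_or_ne x v with rfl | hxv
  · rw [Function.update_self, Function.update_of_ne hxy.ne']
    exact (ha y hy hxy).symm
  rcases eq_or_ne y v with rfl | hyv
  · rw [Function.update_self, Function.update_of_ne hxy.ne]
    exact ha x hx hxy.symm
  · rw [Function.update_of_ne hxv, Function.update_of_ne hyv]
    exact hf x (mem_erase.2 ⟨hxv, hx⟩) y (mem_erase.2 ⟨hyv, hy⟩) hxy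

theorem IsProperOn.union (hX : IsProperOn G X f) (hY : IsProperOn G Y f)
    (hXY : ∀ x ∈ X, ∀ y ∈ Y, G.Adj x y → f x ≠ f y) : IsProperOn G (X ∪ Y) f := by
  intro u hu v hv huv
  rcases mem_union.1 hu with hu | hu <;> rcases mem_union.1 hv with hv | hv
  · exact hX u hu v hv huv
  · exact hXY u hu v hv huv
  · exact (hXY v hv u hu huv.symm).symm
  · exact hY u hu v hv huv

theorem exists_listColoring_of_degenerate (L : V → Finset α)
    (h : ∀ Z ⊆ Y, Z.Nonempty → ∃ z ∈ Z, #(nbrsIn G Z z) < #(L z)) (φ : V → α) :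
    ∃ ψ : V → α, (∀ u ∉ Y, ψ u = φ u) ∧ (∀ u ∈ Y, ψ u ∈ L u) ∧ IsProperOn G Y ψ := by
  induction Y using Finset.strongInduction with
  | H Y ih =>
    rcases Y.eq_empty_or_nonempty with rfl | hY
    · exact ⟨φ, by simp, by simp, by simp [IsProperOn]⟩
    obtain ⟨z, hz, hlt⟩ := h Y subset_rfl hY
    obtain ⟨ψ, hψφ, hψL, hψ⟩ := ih (Y.erase z) (erase_ssubset hz)
      fun Z hZ => h Z (hZ.trans (erase_subset _ _))
    obtain ⟨a, haL, ha⟩ := exists_mem_forall_adj_ne ψ hlt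
    refine ⟨Function.update ψ z a, fun u hu => ?_, fun u hu => ?_, hψ.update ha⟩
    · have huz : u ≠ z := fun h => hu (h ▸ hz)
      rw [Function.update_of_ne huz, hψφ u fun h => hu (mem_of_mem_erase h)]
    · rcases eq_or_ne u z with rfl | huz
      · rwa [Function.update_self]
      · rw [Function.update_of_ne huz]
        exact hψL u (mem_erase.2 ⟨huz, hu⟩)

/-- `Z` is a union of connected components of the subgraph of `G` induced by `Y`. -/
def IsClosedIn (G : SimpleGraph V) (Y Z : Finset V) : Prop :=
  ∀ z ∈ Z, nbrsIn G Y z ⊆ Z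

theorem exists_listColoring_of_slack {L : V → Finset α}
    (hdeg : ∀ y ∈ Y, #(nbrsIn G Y y) ≤ #(L y))
    (hslack : ∀ Z ⊆ Y, Z.Nonempty → IsClosedIn G Y Z → ∃ z ∈ Z, #(nbrsIn G Y z) < #(L z))
    (φ : V → α) :
    ∃ ψ : V → α, (∀ u ∉ Y, ψ u = φ u) ∧ (∀ u ∈ Y, ψ u ∈ L u) ∧ IsProperOn G Y ψ := by
  refine exists_listColoring_of_degenerate L (fun Z hZY hZ => ?_) φ
  by_cases hclosed : IsClosedIn G Y Z
  · obtain ⟨z, hz, hlt⟩ := hslack Z hZY hZ hclosed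
    exact ⟨z, hz, (card_le_card (nbrsIn_mono hZY z)).trans_lt hlt⟩
  · obtain ⟨z, hz, w, hw, hwZ⟩ : ∃ z ∈ Z, ∃ w ∈ nbrsIn G Y z, w ∉ Z := by
      simpa [IsClosedIn, not_subset] using hclosed
    rw [mem_nbrsIn] at hw
    exact ⟨z, hz, (card_nbrsIn_lt hZY hw.1 hwZ hw.2).trans_le (hdeg z (hZY hz))⟩

theorem IsProperOn.exists_extension [Fintype α] (hf : IsProperOn G X f) (hXY : Disjoint X Y)
    (hdeg : ∀ y ∈ Y, #(nbrsIn G (X ∪ Y) y) ≤ Fintype.card α)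
    (hslack : ∀ Z ⊆ Y, Z.Nonempty → IsClosedIn G Y Z →
      ∃ z ∈ Z, #((nbrsIn G X z).image f) + #(nbrsIn G Y z) < Fintype.card α) :
    ∃ ψ : V → α, (∀ u ∉ Y, ψ u = f u) ∧ IsProperOn G (X ∪ Y) ψ := by
  set L : V → Finset α := fun y => ((nbrsIn G X y).image f)ᶜ
  have hcard (y) : #(L y) = Fintype.card α - #((nbrsIn G X y).image f) := card_compl _
  obtain ⟨ψ, hψf, hψL, hψ⟩ := exists_listColoring_of_slack (G := G) (Y := Y) (L := L)
    (fun y hy => by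
      have := hdeg y hy
      have := card_image_le (s := nbrsIn G X y) (f := f)
      rw [card_nbrsIn_union hXY] at *
      rw [hcard]
      omega)
    (fun Z hZY hZ hclosed => by
      obtain ⟨z, hz, hlt⟩ := hslack Z hZY hZ hclosed
      exact ⟨z, hz, by rw [hcard]; omega⟩) f
  have hψX : ∀ x ∈ X, ψ x = f x := fun x hx => hψf x (disjoint_left.1 hXY hx)
  refine ⟨ψ, hψf, (hf.congr hψX).union hψ fun x hx y hy hxy hψxy => ?_⟩
  refine mem_compl.1 (hψL y hy) (mem_image.2 ⟨x, mem_nbrsIn.2 ⟨hx, hxy.symm⟩, ?_⟩)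
  rw [← hψX x hx, hψxy]

end Greedy

section Connected

variable {V α : Type*} {G : SimpleGraph V} {X Y : Finset V} {f : V → α} {u v w y : V}
  {l : List V}

/-- The subgraph of `G` induced by `Y` is connected or empty. -/
def IsConnectedOn (G : SimpleGraph V) (Y : Finset V) : Prop :=
  ∀ Z ⊆ Y, Z.Nonempty → IsClosedIn G Y Z → Y ⊆ Z

theorem IsConnectedOn.insert (hY : IsConnectedOn G Y) (hwY : w ∈ Y) (hvw : G.Adj v w) :
    IsConnectedOn G (insert v Y) := by
  intro Z hZ hZne hclosed
  have hclosed' : ∀ z ∈ Z, ∀ y ∈ Insert.insert v Y, G.Adj z y → y ∈ Z :=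
    fun z hz y hy hzy => hclosed z hz (mem_nbrsIn.2 ⟨hy, hzy⟩)
  have hne : (Z ∩ Y).Nonempty := by
    obtain ⟨z, hz⟩ := hZne
    rcases mem_insert.1 (hZ hz) with rfl | hzY
    · exact ⟨w, mem_inter.2 ⟨hclosed' _ hz w (mem_insert_of_mem hwY) hvw, hwY⟩⟩
    · exact ⟨z, mem_inter.2 ⟨hz, hzY⟩⟩
  have hYZ : Y ⊆ Z := (hY (Z ∩ Y) inter_subset_right hne fun z hz y hy => by
    rw [mem_nbrsIn] at hy
    exact mem_inter.2 ⟨hclosed' z (mem_inter.1 hz).1 y (mem_insert_of_mem hy.1) hy.2, hy.1⟩).trans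
      inter_subset_left
  exact insert_subset (hclosed' w (hYZ hwY) v (mem_insert_self _ _) hvw.symm) hYZ

theorem isConnectedOn_singleton : IsConnectedOn G {v} := fun _ hZ hZne _ =>
  (subset_singleton_iff.1 hZ).resolve_left hZne.ne_empty ▸ subset_rfl

theorem isConnectedOn_of_isChain (hl : l.IsChain G.Adj) : IsConnectedOn G l.toFinset := by
  induction l with
  | nil => exact fun Z _ _ _ => empty_subset Z
  | cons a l ih =>
    cases l with
    | nil => simpa using isConnectedOn_singleton
    | cons b l =>
      rw [List.isChain_cons_cons] at hl
      rw [List.toFinset_cons]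
      exact (ih hl.2).insert (List.mem_toFinset.2 List.mem_cons_self) hl.1

theorem isConnectedOn_erase_of_cycleChain (hl : l.Nodup) (hchain : Cycle.Chain G.Adj (l : Cycle V))
    (hw : w ∈ l) : IsConnectedOn G (l.toFinset.erase w) := by
  obtain ⟨m, m', rfl⟩ := List.append_of_mem hw
  have hrot : ((m ++ w :: m' : List V) : Cycle V) = ((w :: (m' ++ m) : List V) : Cycle V) :=
    Cycle.coe_eq_coe.2 List.isRotated_append
  rw [hrot, Cycle.chain_coe_cons, ← List.cons_append] at hchain
  have hchain' : (m' ++ m).IsChain G.Adj := hchain.left_of_append.tail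
  have hw' : w ∉ m' ++ m := by
    have := (List.isRotated_append (l := m) (l' := w :: m')).nodup_iff.1 hl
    exact (List.nodup_cons.1 this).1
  have herase : (m ++ w :: m').toFinset.erase w = (m' ++ m).toFinset := by
    rw [← erase_insert (mt List.mem_toFinset.1 hw')]
    congr 1
    ext
    simp only [List.mem_toFinset, List.mem_append, List.mem_cons, mem_insert]
    tauto
  exact herase ▸ isConnectedOn_of_isChain hchain'

theorem IsProperOn.exists_union_of_connected [Fintype α] (hf : IsProperOn G X f)
    (hXY : Disjoint X Y) (hdeg : ∀ y ∈ Y, #(nbrsIn G (X ∪ Y) y) ≤ Fintype.card α)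
    (hY : IsConnectedOn G Y)
    (hy : y ∈ Y) (hu : u ∈ X) (hv : v ∈ X) (huv : u ≠ v) (hyu : G.Adj y u) (hyv : G.Adj y v)
    (hfuv : f u = f v) : ∃ g : V → α, IsProperOn G (X ∪ Y) g := by
  obtain ⟨g, -, hg⟩ := hf.exists_extension hXY hdeg fun Z hZY hZ hclosed => by
    refine ⟨y, hY Z hZY hZ hclosed hy, ?_⟩
    have hrepeat : #((nbrsIn G X y).image f) < #(nbrsIn G X y) :=
      lt_of_le_of_ne card_image_le fun heq => huv <| card_image_iff.1 heq
        (mem_nbrsIn.2 ⟨hu, hyu⟩) (mem_nbrsIn.2 ⟨hv, hyv⟩) hfuv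
    have := hdeg y hy
    rw [card_nbrsIn_union hXY] at this
    omega
  exact ⟨g, hg⟩

end Connected

section Brooks

variable {V α : Type*} {G : SimpleGraph V} {S C : Finset V} {f : V → α} {h u v w : V}
  {l t : List V}

theorem IsProperOn.exists_of_erase [Fintype α] (hf : IsProperOn G (S.erase v) f)
    (hv : #(nbrsIn G S v) < Fintype.card α) : ∃ g : V → α, IsProperOn G S g := by
  obtain ⟨a, -, ha⟩ := exists_mem_forall_adj_ne f (L := (univ : Finset α)) hv
  exact ⟨_, hf.update ha⟩

theorem IsProperOn.exists_of_isClosedIn (hC : IsClosedIn G S C) {g : V → α}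
    (hf : IsProperOn G C f) (hg : IsProperOn G (S \ C) g) : ∃ g : V → α, IsProperOn G S g := by
  refine ⟨fun v => if v ∈ C then f v else g v, fun u hu v hv huv => ?_⟩
  by_cases huC : u ∈ C
  · have hvC : v ∈ C := hC u huC (mem_nbrsIn.2 ⟨hv, huv⟩)
    simpa only [huC, hvC, if_true] using hf u huC v hvC huv
  · have hvC : v ∉ C := fun hvC => huC (hC v hvC (mem_nbrsIn.2 ⟨hu, huv.symm⟩))
    simpa only [huC, hvC, if_false] using
      hg u (mem_sdiff.2 ⟨hu, huC⟩) v (mem_sdiff.2 ⟨hv, hvC⟩) huv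

/-- `l` lists the vertices of a path of `G` inside `S` in order. -/
structure IsPathIn (G : SimpleGraph V) (S : Finset V) (l : List V) : Prop where
  nodup : l.Nodup
  isChain : l.IsChain G.Adj
  subset : l.toFinset ⊆ S

theorem IsPathIn.cons (hl : IsPathIn G S (h :: t)) (hv : v ∈ nbrsIn G S h) (hvt : v ∉ t) :
    IsPathIn G S (v :: h :: t) := by
  rw [mem_nbrsIn] at hv
  refine ⟨List.nodup_cons.2 ⟨?_, hl.nodup⟩, List.isChain_cons_cons.2 ⟨hv.2.symm, hl.isChain⟩, ?_⟩
  · exact List.not_mem_cons_of_ne_of_not_mem hv.2.ne' hvt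
  · rw [List.toFinset_cons]
    exact insert_subset hv.1 hl.subset

theorem IsPathIn.exists_maximal (hl : IsPathIn G S l) :
    ∃ q, IsPathIn G S (q ++ l) ∧ ∀ v, ¬ IsPathIn G S (v :: (q ++ l)) := by
  induction hn : #S - l.length using Nat.strong_induction_on generalizing l with
  | _ n ih =>
    by_cases hmax : ∀ v, ¬ IsPathIn G S (v :: l)
    · exact ⟨[], hl, hmax⟩
    push Not at hmax
    obtain ⟨v, hv⟩ := hmax
    have hlength : (v :: l).length ≤ #S :=
      (List.toFinset_card_of_nodup hv.nodup) ▸ card_le_card hv.subset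
    rw [List.length_cons] at hlength
    obtain ⟨q, hq⟩ := ih _ (by rw [List.length_cons]; omega) hv rfl
    exact ⟨q ++ [v], by simpa using hq⟩

theorem IsPathIn.exists_cycle (hl : IsPathIn G S (h :: t))
    (hmax : ∀ v, ¬ IsPathIn G S (v :: h :: t)) (hne : (nbrsIn G S h).Nonempty) :
    ∃ m, (h :: m) <+: (h :: t) ∧ Cycle.Chain G.Adj ((h :: m : List V) : Cycle V) ∧
      nbrsIn G S h ⊆ (h :: m).toFinset := by
  have hnbrs : ∀ v ∈ nbrsIn G S h, v ∈ t := fun v hv => by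
    by_contra hvt
    exact hmax v (hl.cons hv hvt)
  obtain ⟨a, ha⟩ := hne
  obtain ⟨x, hx⟩ : ∃ x, t.reverse.find? (· ∈ nbrsIn G S h) = some x :=
    Option.isSome_iff_exists.1
      (List.find?_isSome.2 ⟨a, by simpa using hnbrs a ha, by simpa using ha⟩)
  obtain ⟨hxh, as, bs, hsplit, hlast⟩ := List.find?_eq_some_iff_append.1 hx
  obtain rfl : t = (bs.reverse ++ [x]) ++ as.reverse := by
    simpa using congrArg List.reverse hsplit
  refine ⟨bs.reverse ++ [x], List.prefix_append (h :: (bs.reverse ++ [x])) as.reverse, ?_,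
    fun v hv => ?_⟩
  · rw [Cycle.chain_coe_cons, ← List.cons_append]
    refine hl.isChain.left_of_append (l₁ := h :: (bs.reverse ++ [x])) |>.append
      (List.isChain_singleton h) ?_
    have hhx : G.Adj h x := (mem_nbrsIn.1 (of_decide_eq_true hxh)).2
    rw [← List.cons_append, List.getLast?_concat]
    simpa using hhx.symm
  · have hvt := hnbrs v hv
    have hvas := hlast v
    simp only [List.mem_append, List.mem_reverse, List.mem_singleton] at hvt
    simp only [hv, decide_true, Bool.not_true, Bool.false_eq_true, imp_false] at hvas
    simp only [List.toFinset_cons, mem_insert, List.mem_toFinset, List.mem_append,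
      List.mem_reverse, List.mem_singleton]
    tauto

theorem IsProperOn.exists_of_cycle [Fintype α] (hf : IsProperOn G (S \ C) f) (hCS : C ⊆ S)
    (hdeg : ∀ v ∈ S, #(nbrsIn G S v) ≤ Fintype.card α) (hC : IsConnectedOn G C)
    (hC' : ∀ w ∈ C, IsConnectedOn G (C.erase w)) (hh : h ∈ C) (hnbrs : nbrsIn G S h ⊆ C)
    (hout : ¬ IsClosedIn G S C) : ∃ g : V → α, IsProperOn G S g := by
  obtain ⟨w, hw, u, huC, huw, hu⟩ : ∃ w ∈ C.filter (nbrsIn G S · ⊆ C), ∃ u ∈ C, G.Adj w u ∧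
      ¬ nbrsIn G S u ⊆ C := by
    by_contra! hcon
    refine hout fun v hv => (mem_filter.1 (hC (C.filter (nbrsIn G S · ⊆ C)) (filter_subset _ _)
      ⟨h, mem_filter.2 ⟨hh, hnbrs⟩⟩ (fun w hw u hu => ?_) hv)).2
    rw [mem_nbrsIn] at hu
    exact mem_filter.2 ⟨hu.1, hcon w hw u hu.1 hu.2⟩
  rw [mem_filter] at hw
  obtain ⟨a, ha, haC⟩ := not_subset.1 hu
  rw [mem_nbrsIn] at ha
  have haw : a ≠ w := fun h => haC (h ▸ hw.1)
  have hunion : insert w (S \ C) ∪ C.erase w = S := by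
    rw [insert_union, ← union_insert, insert_erase hw.1, sdiff_union_of_subset hCS]
  -- `w` may copy the colour of `a`, and then `u` sees that colour twice.
  have hf' : IsProperOn G (insert w (S \ C)) (Function.update f w (f a)) := by
    refine IsProperOn.update (hf.mono (erase_insert_subset _ _)) fun b hb hwb => ?_
    rcases mem_insert.1 hb with rfl | hb
    · exact absurd hwb (G.irrefl)
    · exact absurd (hw.2 (mem_nbrsIn.2 ⟨(mem_sdiff.1 hb).1, hwb⟩)) (mem_sdiff.1 hb).2
  rw [← hunion]
  refine hf'.exists_union_of_connected (disjoint_insert_left.2 ⟨notMem_erase w C,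
    disjoint_of_subset_right (erase_subset w C) sdiff_disjoint⟩) (fun y hy => ?_) (hC' w hw.1)
    (mem_erase.2 ⟨huw.ne', huC⟩) (mem_insert_of_mem (mem_sdiff.2 ⟨ha.1, haC⟩))
    (mem_insert_self w _) haw ha.2 huw.symm ?_
  · rw [hunion]
    exact hdeg y (hCS (mem_of_mem_erase hy))
  · rw [Function.update_self, Function.update_of_ne haw]

theorem IsPathIn.exists_isProperOn_of_spanning [Fintype α] {q : List V}
    (hpath : IsPathIn G S (q ++ [w, v, u])) (hspan : S ⊆ (q ++ [w, v, u]).toFinset)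
    (hdeg : ∀ v ∈ S, #(nbrsIn G S v) ≤ Fintype.card α) (hv : 3 ≤ #(nbrsIn G S v))
    (huw : ¬ G.Adj u w) : ∃ g : V → α, IsProperOn G S g := by
  obtain ⟨hnodup, hchain, hsub⟩ := hpath
  obtain rfl : (q ++ [w, v, u]).toFinset = S := hsub.antisymm hspan
  set S := (q ++ [w, v, u]).toFinset with hS
  have hvS : v ∈ S := by simp [S]
  have hvwu : G.Adj v w ∧ G.Adj v u := by
    have := hchain.right_of_append
    simp only [List.isChain_cons_cons] at this
    exact ⟨this.1.symm, this.2.1⟩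
  obtain ⟨a⟩ : Nonempty α := Fintype.card_pos_iff.1 (by have := hdeg v hvS; omega)
  obtain ⟨z, hz, hzuw⟩ : ∃ z ∈ nbrsIn G S v, z ∉ ({u, w} : Finset V) :=
    exists_mem_notMem_of_card_lt_card (card_le_two.trans_lt hv)
  have hrest : S \ {u, w} = insert v q.toFinset := by
    simp only [List.nodup_append, List.nodup_cons, List.mem_cons] at hnodup
    ext y
    simp only [S, List.toFinset_append, mem_sdiff, mem_union, List.mem_toFinset, mem_insert,
      List.mem_cons, mem_singleton]
    grind
  have hzq : z ∈ q.toFinset := by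
    rw [mem_nbrsIn] at hz
    exact (mem_insert.1 (hrest ▸ mem_sdiff.2 ⟨hz.1, hzuw⟩)).resolve_left hz.2.ne'
  have hpair : {u, w} ⊆ S := by simp [S, insert_subset_iff]
  have hproper : IsProperOn G {u, w} (fun _ => a) := by
    simp [IsProperOn, huw, G.adj_comm w u]
  rw [← union_sdiff_of_subset hpair]
  refine hproper.exists_union_of_connected disjoint_sdiff (fun y hy => ?_) ?_ (y := v) ?_
    (mem_insert_self u _) (mem_insert_of_mem (mem_singleton_self w)) ?_ hvwu.2 hvwu.1 rfl
  · rw [union_sdiff_of_subset hpair]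
    exact hdeg y (mem_sdiff.1 hy).1
  · rw [hrest]
    exact (isConnectedOn_of_isChain hchain.left_of_append).insert hzq (mem_nbrsIn.1 hz).2
  · rw [hrest]
    exact mem_insert_self v _
  · rintro rfl
    simp [List.nodup_append] at hnodup

theorem exists_mem_nbrsIn_not_adj {n : ℕ} (hfree : G.CliqueFree (n + 1))
    (hn : #(nbrsIn G S v) = n) :
    ∃ u ∈ nbrsIn G S v, ∃ w ∈ nbrsIn G S v, u ≠ w ∧ ¬ G.Adj u w := by
  by_contra! hcon
  have hclique : G.IsNClique n (nbrsIn G S v) := ⟨fun u hu w hw huw => hcon u hu w hw huw, hn⟩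
  exact hfree _ (hclique.insert fun u hu => (mem_nbrsIn.1 hu).2)

theorem IsPathIn.exists_isProperOn_of_maximal [Fintype α] {q : List V}
    (hpath : IsPathIn G S (q ++ [w, v, u])) (hmax : ∀ x, ¬ IsPathIn G S (x :: (q ++ [w, v, u])))
    (hdeg : ∀ v ∈ S, #(nbrsIn G S v) ≤ Fintype.card α) (hdeg' : ∀ v ∈ S, 3 ≤ #(nbrsIn G S v))
    (huw : ¬ G.Adj u w) (ih : ∀ Y ⊂ S, ∃ f : V → α, IsProperOn G Y f) :
    ∃ f : V → α, IsProperOn G S f := by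
  obtain ⟨h, t, hht⟩ : ∃ h t, q ++ [w, v, u] = h :: t := List.exists_cons_of_ne_nil (by simp)
  have hpath' : IsPathIn G S (h :: t) := hht ▸ hpath
  have hh : h ∈ S := hpath'.subset (by simp)
  obtain ⟨m, hprefix, hcycle, hnbrs⟩ := hpath'.exists_cycle (hht ▸ hmax)
    (card_pos.1 (three_pos.trans_le (hdeg' h hh)))
  set C := (h :: m).toFinset
  have hCpath : C ⊆ (q ++ [w, v, u]).toFinset := fun x hx => by
    rw [hht]
    exact List.mem_toFinset.2 (hprefix.subset (List.mem_toFinset.1 hx))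
  have hCS : C ⊆ S := hCpath.trans hpath.subset
  have hhC : h ∈ C := by simp [C]
  obtain ⟨g, hg⟩ := ih (S \ C) (sdiff_ssubset hCS ⟨h, hhC⟩)
  by_cases hclosed : IsClosedIn G S C
  · rcases hCS.eq_or_ssubset with hCS | hCS
    · exact hpath.exists_isProperOn_of_spanning (hCS ▸ hCpath) hdeg
        (hdeg' v (hpath.subset (by simp))) huw
    · obtain ⟨f, hf⟩ := ih C hCS
      exact hf.exists_of_isClosedIn hclosed hg
  · exact hg.exists_of_cycle hCS hdeg (isConnectedOn_of_isChain (hpath'.isChain.prefix hprefix))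
      (fun w hw => isConnectedOn_erase_of_cycleChain (hpath'.nodup.sublist hprefix.sublist) hcycle
        (List.mem_toFinset.1 hw)) hhC hnbrs hclosed

theorem exists_isProperOn_of_cliqueFree [Fintype α] (hα : 3 ≤ Fintype.card α)
    (hfree : G.CliqueFree (Fintype.card α + 1))
    (hdeg : ∀ v ∈ S, #(nbrsIn G S v) ≤ Fintype.card α) : ∃ f : V → α, IsProperOn G S f := by
  induction S using Finset.strongInduction with
  | H S ih =>
    replace ih : ∀ Y ⊂ S, ∃ f : V → α, IsProperOn G Y f := fun Y hY => ih Y hY fun v hv =>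
      (card_le_card (nbrsIn_mono hY.subset v)).trans (hdeg v (hY.subset hv))
    by_cases hlow : ∃ v ∈ S, #(nbrsIn G S v) < Fintype.card α
    · obtain ⟨v, hv, hlt⟩ := hlow
      obtain ⟨f, hf⟩ := ih _ (erase_ssubset hv)
      exact hf.exists_of_erase hlt
    have hregular : ∀ v ∈ S, #(nbrsIn G S v) = Fintype.card α := fun v hv =>
      (hdeg v hv).antisymm (not_lt.1 fun h => hlow ⟨v, hv, h⟩)
    rcases S.eq_empty_or_nonempty with rfl | ⟨v, hv⟩
    · obtain ⟨a⟩ : Nonempty α := Fintype.card_pos_iff.1 (by omega)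
      exact ⟨fun _ => a, by simp [IsProperOn]⟩
    obtain ⟨u, hu, w, hw, hne, huw⟩ := exists_mem_nbrsIn_not_adj hfree (hregular v hv)
    rw [mem_nbrsIn] at hu hw
    have hstart : IsPathIn G S [w, v, u] :=
      ⟨by simp [hne.symm, hu.2.ne, hw.2.ne'], by simp [hu.2, hw.2.symm],
        by simp [insert_subset_iff, hu.1, hv, hw.1]⟩
    obtain ⟨q, hq, hmax⟩ := hstart.exists_maximal
    exact hq.exists_isProperOn_of_maximal hmax hdeg (fun v hv => by rw [hregular v hv]; exact hα)
      huw ih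

end Brooks

section Hall

variable {β δ : Type*} [Fintype β] [Fintype δ]

theorem exists_equiv_forall_notMem {M : β → Finset δ} (hcard : Fintype.card β = Fintype.card δ)
    (hM : ∑ b, #(M b) < Fintype.card δ) : ∃ e : β ≃ δ, ∀ b, e b ∉ M b := by
  obtain ⟨e, he, heM⟩ :=
    (all_card_le_biUnion_card_iff_exists_injective fun b => (M b)ᶜ).1 fun s => by
      by_contra! hlt
      let u : Finset δ := (s.biUnion fun b => (M b)ᶜ)ᶜ
      have hsu : Fintype.card δ < #s + #u := by
        rw [← card_add_card_compl (s.biUnion fun b => (M b)ᶜ)]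
        exact Nat.add_lt_add_right hlt _
      have huM : ∀ b ∈ s, u ⊆ M b := fun b hb x hx => by
        by_contra hxb
        exact mem_compl.1 hx (mem_biUnion.2 ⟨b, hb, mem_compl.2 hxb⟩)
      have hmul : #s * #u ≤ ∑ b, #(M b) :=
        (card_nsmul_le_sum s _ _ fun b hb => card_le_card (huM b hb)).trans
          (sum_le_sum_of_subset (subset_univ s))
      have := card_le_univ s
      have := card_le_univ u
      nlinarith
  refine ⟨Equiv.ofBijective e ((Fintype.bijective_iff_injective_and_card e).2 ⟨he, hcard⟩),
    fun b => mem_compl.1 (heM b)⟩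

theorem exists_perm_forall_notMem {M : β → Finset β} (a b : β)
    (hM : ∑ x, #(M x) + 1 < Fintype.card β) :
    ∃ e : Equiv.Perm β, e a = b ∧ ∀ x ≠ a, e x ∉ M x := by
  have hcard (y : β) : Fintype.card {x // x ≠ y} = Fintype.card β - 1 := by simp
  obtain ⟨e, he⟩ := exists_equiv_forall_notMem (β := {x // x ≠ a}) (δ := {x // x ≠ b})
    (M := fun x => (M x).subtype (· ≠ b)) (by simp) <| calc
      ∑ x : {x // x ≠ a}, #((M x).subtype (· ≠ b)) ≤ ∑ x : {x // x ≠ a}, #(M x) :=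
        sum_le_sum fun x _ => by
          rw [card_subtype]
          exact card_filter_le _ _
      _ ≤ ∑ x, #(M x) := by
        rw [← sum_subtype {x | x ≠ a} (by simp) fun x => #(M x)]
        exact sum_le_sum_of_subset (subset_univ _)
      _ < Fintype.card {x // x ≠ b} := by
        rw [hcard]
        omega
  refine ⟨e.extendSubtype, ?_, fun x hx hxM => ?_⟩
  · exact not_not.1 (e.extendSubtype_not_mem a (not_not.2 rfl))
  · rw [e.extendSubtype_apply_of_mem x hx] at hxM
    exact he ⟨x, hx⟩ (mem_subtype.2 hxM)

end Hall

section Components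

variable {V α : Type*} [Fintype V] {G : SimpleGraph V} {T : Finset V}

theorem card_nbrsIn_univ (v : V) : #(nbrsIn G univ v) = G.degree v := by
  rw [nbrsIn, ← G.neighborFinset_eq_filter, G.card_neighborFinset_eq_degree]

theorem card_nbrsIn_le_degree (Y : Finset V) (v : V) : #(nbrsIn G Y v) ≤ G.degree v :=
  (card_le_card (nbrsIn_mono (subset_univ Y) v)).trans (card_nbrsIn_univ v).le

/-- The graph `G` with all edges at `T` removed. Its components serve as the components of `G - T`,
apart from the vertices of `T`, which become isolated and are ignored. -/
def outer (G : SimpleGraph V) (T : Finset V) : SimpleGraph V where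
  Adj u v := G.Adj u v ∧ u ∉ T ∧ v ∉ T
  symm := ⟨fun _ _ h => ⟨h.1.symm, h.2.2, h.2.1⟩⟩
  loopless := ⟨fun _ h => G.irrefl h.1⟩

/-- The vertices of a component of `G - T`. -/
def verts (C : (outer G T).ConnectedComponent) : Finset V :=
  {r | r ∉ T ∧ (outer G T).connectedComponentMk r = C}

/-- The vertices of `T` adjacent to a component of `G - T`. -/
def attachments (C : (outer G T).ConnectedComponent) : Finset V :=
  {t ∈ T | ∃ r ∈ verts C, G.Adj t r}

variable {C : (outer G T).ConnectedComponent} {r t : V}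

@[simp]
theorem mem_verts : r ∈ verts C ↔ r ∉ T ∧ (outer G T).connectedComponentMk r = C := by
  simp [verts]

@[simp]
theorem mem_attachments : t ∈ attachments C ↔ t ∈ T ∧ ∃ r ∈ verts C, G.Adj t r := by
  simp [attachments]

theorem mem_verts_mk (hr : r ∉ T) : r ∈ verts ((outer G T).connectedComponentMk r) :=
  mem_verts.2 ⟨hr, rfl⟩

theorem mem_verts_of_adj {u v : V} (hu : u ∈ verts C) (hv : v ∉ T) (huv : G.Adj u v) :
    v ∈ verts C := by
  rw [mem_verts] at hu ⊢
  refine ⟨hv, hu.2 ▸ (SimpleGraph.ConnectedComponent.connectedComponentMk_eq_of_adj ?_).symm⟩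
  exact ⟨huv, hu.1, hv⟩

theorem isConnectedOn_verts (C : (outer G T).ConnectedComponent) : IsConnectedOn G (verts C) := by
  rintro Z hZ ⟨z, hz⟩ hclosed r hr
  have hzr : (outer G T).Reachable z r := SimpleGraph.ConnectedComponent.exact <|
    (mem_verts.1 (hZ hz)).2.trans (mem_verts.1 hr).2.symm
  have hwalk : ∀ {u v : V}, (outer G T).Walk u v → u ∈ Z → v ∈ Z := by
    intro u v p hu
    induction p with
    | nil => exact hu
    | cons huv _ ih =>
      exact ih (hclosed _ hu (mem_nbrsIn.2 ⟨mem_verts_of_adj (hZ hu) huv.2.2 huv.1, huv.1⟩))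
  exact hzr.elim fun p => hwalk p hz

theorem sum_sum_verts (G : SimpleGraph V) (T : Finset V) (g : V → ℕ) :
    ∑ C : (outer G T).ConnectedComponent, ∑ r ∈ verts C, g r = ∑ r ∈ Tᶜ, g r := by
  rw [← sum_fiberwise Tᶜ (outer G T).connectedComponentMk g]
  exact sum_congr rfl fun C _ => sum_congr (by ext; simp) fun _ _ => rfl

/-- The colouring `z` of `T` extends to the component `C` of `G - T`. -/
def Extends (C : (outer G T).ConnectedComponent) (z : V → α) : Prop :=
  ∃ φ : V → α, IsProperOn G (verts C) φ ∧ ∀ r ∈ verts C, ∀ t ∈ T, G.Adj t r → φ r ≠ z t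

theorem Extends.congr {z w : V → α} (h : Extends C z) (hzw : ∀ t ∈ attachments C, w t = z t) :
    Extends C w := by
  obtain ⟨φ, hφ, hφz⟩ := h
  refine ⟨φ, hφ, fun r hr t ht htr => ?_⟩
  rw [hzw t (mem_attachments.2 ⟨ht, r, hr, htr⟩)]
  exact hφz r hr t ht htr

theorem extends_coloring (C : (outer G T).ConnectedComponent) (h : G.Coloring α) : Extends C h :=
  ⟨h, fun _ _ _ _ huv => h.valid huv, fun _ _ _ _ htr => h.valid htr.symm⟩

theorem isProperOn_union_of_extends {A B : Finset V} {z : V → α} (hA : A ⊆ T)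
    (hz : IsProperOn G A z) (hB : Disjoint T B)
    (hext : ∀ r ∈ B, Extends ((outer G T).connectedComponentMk r) z) :
    ∃ f : V → α, (∀ a ∈ A, f a = z a) ∧ IsProperOn G (A ∪ B) f := by
  have hext' : ∀ C : (outer G T).ConnectedComponent, ∃ φ : V → α,
      Extends C z → IsProperOn G (verts C) φ ∧ ∀ r ∈ verts C, ∀ t ∈ T, G.Adj t r → φ r ≠ z t :=
    fun C => by
      by_cases h : Extends C z
      · exact h.imp fun φ hφ _ => hφ
      · exact ⟨z, fun h' => absurd h' h⟩
  choose φ hφ using hext'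
  have hBT : ∀ r ∈ B, r ∉ T := fun r hr hrT => disjoint_left.1 hB hrT hr
  set f : V → α := fun r => if r ∈ T then z r else φ ((outer G T).connectedComponentMk r) r
  have hfT : ∀ t ∈ T, f t = z t := fun t ht => if_pos ht
  have hfB : ∀ r ∈ B, f r = φ ((outer G T).connectedComponentMk r) r :=
    fun r hr => if_neg (hBT r hr)
  refine ⟨f, fun a ha => hfT a (hA ha), (hz.congr fun a ha => hfT a (hA ha)).union ?_ ?_⟩
  · intro u hu v hv huv
    have hv' := mem_verts_of_adj (mem_verts_mk (hBT u hu)) (hBT v hv) huv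
    rw [hfB u hu, hfB v hv, (mem_verts.1 hv').2]
    exact (hφ _ (hext u hu)).1 u (mem_verts_mk (hBT u hu)) v hv' huv
  · intro a ha r hr har
    rw [hfT a (hA ha), hfB r hr]
    exact ((hφ _ (hext r hr)).2 r (mem_verts_mk (hBT r hr)) a (hA ha) har).symm

theorem exists_coloring_of_extends [Fintype α] (hdeg : ∀ v, G.degree v ≤ Fintype.card α)
    (hT : ∀ t ∈ T, G.degree t < Fintype.card α) {A : Finset V} (hA : A ⊆ T) {z : V → α}
    (hz : IsProperOn G A z)
    (hext : ∀ C : (outer G T).ConnectedComponent, attachments C ⊆ A → Extends C z) :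
    ∃ h : G.Coloring α, ∀ a ∈ A, h a = z a := by
  set B : Finset V := {r | r ∉ T ∧ attachments ((outer G T).connectedComponentMk r) ⊆ A}
  obtain ⟨f, hfz, hf⟩ := isProperOn_union_of_extends (B := B) hA hz
    (disjoint_right.2 fun r hr => (mem_filter.1 hr).2.1) fun r hr => hext _ (mem_filter.1 hr).2.2
  have hunion : (A ∪ B) ∪ (A ∪ B)ᶜ = univ := union_compl _
  obtain ⟨g, hgf, hg⟩ := hf.exists_extension disjoint_compl_right
    (fun y _ => by rw [hunion, card_nbrsIn_univ]; exact hdeg y) fun Z hZ hZne hclosed => by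
    obtain ⟨t, htZ, htT⟩ : ∃ t ∈ Z, t ∈ T := by
      by_contra! hZT
      obtain ⟨r, hr⟩ := hZne
      set C := (outer G T).connectedComponentMk r
      obtain ⟨t, ht, htA⟩ : ∃ t ∈ attachments C, t ∉ A := by
        have := mem_compl.1 (hZ hr)
        simp only [B, mem_union, mem_filter_univ, not_or, not_and] at this
        exact not_subset.1 (this.2 (hZT r hr))
      obtain ⟨htT, s, hs, hts⟩ := mem_attachments.1 ht
      have hsZ : s ∈ Z ∩ verts C := by
        refine isConnectedOn_verts C _ inter_subset_right
          ⟨r, mem_inter.2 ⟨hr, mem_verts_mk (hZT r hr)⟩⟩ (fun u hu v hv => ?_) hs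
        rw [mem_inter] at hu ⊢
        rw [mem_nbrsIn] at hv
        refine ⟨hclosed u hu.1 (mem_nbrsIn.2 ⟨?_, hv.2⟩), hv.1⟩
        obtain ⟨hvT, hvC⟩ := mem_verts.1 hv.1
        simp only [B, mem_compl, mem_union, mem_filter_univ, not_or, not_and, hvC]
        exact ⟨fun hvA => hvT (hA hvA), fun _ h => htA (h ht)⟩
      exact hZT t (hclosed s (mem_inter.1 hsZ).1 (mem_nbrsIn.2 ⟨by simp [B, htA, htT], hts.symm⟩))
        htT
    refine ⟨t, htZ, (Nat.add_le_add_right card_image_le _).trans_lt ?_⟩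
    rw [← card_nbrsIn_union disjoint_compl_right, hunion, card_nbrsIn_univ]
    exact hT t htT
  rw [hunion] at hg
  refine ⟨.mk g fun {u v} huv => hg u (mem_univ u) v (mem_univ v) huv, fun a ha => ?_⟩
  exact (hgf a (by simp [ha])).trans (hfz a ha)

theorem card_not_extends_le_card_nbrsIn [Fintype α] (hdeg : ∀ v, G.degree v ≤ Fintype.card α)
    {b : V} (hb : b ∈ attachments C) (z : V → α) :
    #{γ | ¬ Extends C (Function.update z b γ)} ≤ #(nbrsIn G (verts C) b) := by
  obtain ⟨hbT, r₀, hr₀, hbr₀⟩ := mem_attachments.1 hb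
  have hdisj : Disjoint (T.erase b) (verts C) :=
    disjoint_left.2 fun x hx hxC => (mem_verts.1 hxC).1 (mem_of_mem_erase hx)
  have hb' : b ∉ T.erase b ∪ verts C := by simp [hbT]
  have hL (r : V) : Fintype.card α ≤
      #((nbrsIn G (T.erase b) r).image z)ᶜ + #(nbrsIn G (T.erase b) r) := by
    rw [card_compl]
    have := card_image_le (s := nbrsIn G (T.erase b) r) (f := z)
    omega
  have hsplit := card_nbrsIn_union (G := G) hdisj
  obtain ⟨ψ, -, hψL, hψ⟩ := exists_listColoring_of_slack (G := G) (Y := verts C)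
    (L := fun r => ((nbrsIn G (T.erase b) r).image z)ᶜ)
    (fun r _ => by
      have := (card_nbrsIn_le_degree (T.erase b ∪ verts C) r).trans (hdeg r)
      have := hL r
      have := hsplit r
      omega)
    (fun Z hZ hZne hclosed => ⟨r₀, isConnectedOn_verts C Z hZ hZne hclosed hr₀, by
      have := (card_nbrsIn_lt (subset_univ _) (mem_univ b) hb' hbr₀.symm).trans_le
        ((card_nbrsIn_univ r₀).trans_le (hdeg r₀))
      have := hL r₀
      have := hsplit r₀
      omega⟩) z
  refine (card_le_card fun γ hγ => ?_).trans (card_image_le (f := ψ))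
  by_contra hγψ
  refine (mem_filter.1 hγ).2 ⟨ψ, hψ, fun r hr t ht htr hrt => ?_⟩
  rcases eq_or_ne t b with rfl | htb
  · rw [Function.update_self] at hrt
    exact hγψ (mem_image.2 ⟨r, mem_nbrsIn.2 ⟨hr, htr⟩, hrt⟩)
  · rw [Function.update_of_ne htb] at hrt
    exact mem_compl.1 (hψL r hr)
      (mem_image.2 ⟨t, mem_nbrsIn.2 ⟨mem_erase.2 ⟨htb, ht⟩, htr.symm⟩, hrt.symm⟩)

theorem extends_of_lt [Fintype α] (ψ : G.Coloring α) {b : V} {Z : Finset V}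
    (hC : attachments C ⊆ insert b Z) {z : V → α} {γ : α} (hγ : γ ∉ (Z ∩ attachments C).image z)
    (hlt : ∑ r ∈ verts C, #(nbrsIn G Z r) + 1 < Fintype.card α) :
    Extends C (Function.update z b γ) := by
  set P : Finset ((_ : V) × V) := (verts C).sigma (nbrsIn G Z)
  set M : α → Finset α := fun x => {p ∈ P | z p.2 = x}.image fun p => ψ p.1
  have hsum : ∑ x, #(M x) ≤ ∑ r ∈ verts C, #(nbrsIn G Z r) := calc
    ∑ x, #(M x) ≤ ∑ x, #{p ∈ P | z p.2 = x} := sum_le_sum fun x _ => card_image_le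
    _ = #P := (card_eq_sum_card_fiberwise fun p _ => mem_coe.2 (mem_univ (z p.2))).symm
    _ = ∑ r ∈ verts C, #(nbrsIn G Z r) := card_sigma _ _
  -- Match the colours `x` of `z` with colours `e x` of `ψ`: `γ` must match the colour of `b`, and
  -- `M x` is what `x` must not match.
  obtain ⟨e, heb, he⟩ := exists_perm_forall_notMem (M := M) γ (ψ b) (by omega)
  refine ⟨fun r => e.symm (ψ r), fun u _ v _ huv h => ψ.valid huv (e.symm.injective h),
    fun r hr t ht htr hrt => ?_⟩
  have hrt : ψ r = e (Function.update z b γ t) := by rw [← hrt, e.apply_symm_apply]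
  rcases eq_or_ne t b with rfl | htb
  · rw [Function.update_self, heb] at hrt
    exact ψ.valid htr hrt.symm
  rw [Function.update_of_ne htb] at hrt
  have htC : t ∈ attachments C := mem_attachments.2 ⟨ht, r, hr, htr⟩
  have htZ : t ∈ Z := mem_of_mem_insert_of_ne (hC htC) htb
  refine he (z t) (fun h => hγ (mem_image.2 ⟨t, mem_inter.2 ⟨htZ, htC⟩, h⟩)) ?_
  rw [← hrt]
  exact mem_image.2 ⟨⟨r, t⟩,
    mem_filter.2 ⟨mem_sigma.2 ⟨hr, mem_nbrsIn.2 ⟨htZ, htr.symm⟩⟩, rfl⟩, rfl⟩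

theorem card_not_extends_le_sum [Fintype α] (hdeg : ∀ v, G.degree v ≤ Fintype.card α)
    (hT : ∀ t ∈ T, G.degree t < Fintype.card α) (ψ : G.Coloring α) {b : V}
    (hb : b ∈ attachments C) {Z : Finset V} (hC : attachments C ⊆ insert b Z) (z : V → α) :
    #{γ | ¬ Extends C (Function.update z b γ)} ≤ ∑ r ∈ verts C, #(nbrsIn G Z r) := by
  by_cases hlt : ∑ r ∈ verts C, #(nbrsIn G Z r) + 1 < Fintype.card α
  · calc #{γ | ¬ Extends C (Function.update z b γ)}
      _ ≤ #((Z ∩ attachments C).image z) := card_le_card fun γ hγ => by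
          by_contra h
          exact (mem_filter.1 hγ).2 (extends_of_lt ψ hC h hlt)
      _ ≤ #(Z ∩ attachments C) := card_image_le
      _ ≤ ∑ y ∈ Z ∩ attachments C, #(nbrsIn G (verts C) y) := by
          rw [card_eq_sum_ones]
          refine sum_le_sum fun y hy => card_pos.2 ?_
          obtain ⟨-, r, hr, hyr⟩ := mem_attachments.1 (mem_inter.1 hy).2
          exact ⟨r, mem_nbrsIn.2 ⟨hr, hyr⟩⟩
      _ ≤ ∑ y ∈ Z, #(nbrsIn G (verts C) y) := sum_le_sum_of_subset inter_subset_left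
      _ = ∑ r ∈ verts C, #(nbrsIn G Z r) := sum_card_nbrsIn_comm G Z _
  · have := card_not_extends_le_card_nbrsIn hdeg hb z
    have := card_nbrsIn_le_degree (G := G) (verts C) b
    have := hT b (mem_attachments.1 hb).1
    omega

section Obstructions

variable (G T) in
/-- What can go wrong when the colouring `z` of a part of `T` is changed to `γ` at `b`: neighbours
of `b` already coloured `γ`, and components of `G - T` at `b` to which the new colouring does not
extend. -/
def conflicts (z : V → α) (b : V) (γ : α) : Finset (V ⊕ (outer G T).ConnectedComponent) :=
  ({y | G.Adj b y ∧ z y = γ} : Finset V).disjSum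
    {C | b ∈ attachments C ∧ ¬ Extends C (Function.update z b γ)}

/-- The vertices other than `b` whose colours are responsible for a conflict at `b`. -/
def support (b : V) : V ⊕ (outer G T).ConnectedComponent → Finset V :=
  Sum.elim (fun y => {y}) fun C => (attachments C).erase b

variable (G T) in
/-- The conflicts that arise if only the vertices of `W` have received their colours. -/
def obstructions (z : V → α) (b : V) (W : Finset V) (γ : α) :
    Finset (V ⊕ (outer G T).ConnectedComponent) :=
  {o ∈ conflicts G T z b γ | support b o ⊆ W}

variable {z : V → α} {b : V} {Y Z U W : Finset V} {γ : α}

theorem obstructions_mono (hYZ : Y ⊆ Z) : obstructions G T z b Y γ ⊆ obstructions G T z b Z γ :=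
  monotone_filter_right _ fun _ _ ho => ho.trans hYZ

theorem ne_of_obstructions_eq_empty (h : obstructions G T z b W γ = ∅) {y : V} (hy : y ∈ W)
    (hby : G.Adj b y) : z y ≠ γ := fun hzy => by
  have : Sum.inl y ∈ obstructions G T z b W γ := by
    simp [obstructions, conflicts, support, hby, hzy, hy]
  simp [h] at this

theorem extends_of_obstructions_eq_empty (h : obstructions G T z b W γ = ∅)
    (hb : b ∈ attachments C) (hC : attachments C ⊆ insert b W) :
    Extends C (Function.update z b γ) := by
  by_contra hext
  have : Sum.inr C ∈ obstructions G T z b W γ := by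
    rw [obstructions, mem_filter, conflicts, inr_mem_disjSum, mem_filter_univ]
    exact ⟨⟨hb, hext⟩, by simpa [support, subset_insert_iff] using hC⟩
  simp [h] at this

theorem exists_coloring_of_obstructions_eq_empty [Fintype α]
    (hdeg : ∀ v, G.degree v ≤ Fintype.card α) (hT : ∀ t ∈ T, G.degree t < Fintype.card α)
    {h : G.Coloring α} (hW : W ⊆ T) (hhz : ∀ a ∈ W, h a = z a) (hbT : b ∈ T) (hbW : b ∉ W)
    (hobs : obstructions G T z b W γ = ∅) :
    ∃ h' : G.Coloring α, ∀ a ∈ insert b W, h' a = Function.update z b γ a := by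
  have hz (a : V) (ha : a ∈ W) : Function.update z b γ a = h a := by
    rw [Function.update_of_ne (ne_of_mem_of_not_mem ha hbW), hhz a ha]
  refine exists_coloring_of_extends hdeg hT (insert_subset hbT hW) (.update ?_ ?_) fun C hC => ?_
  · rw [erase_insert hbW]
    exact fun u hu v hv huv => by
      rw [← hhz u hu, ← hhz v hv]
      exact h.valid huv
  · intro w hw hbw
    exact ne_of_obstructions_eq_empty hobs (mem_of_mem_insert_of_ne hw hbw.ne') hbw
  · by_cases hbC : b ∈ attachments C
    · exact extends_of_obstructions_eq_empty hobs hbC hC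
    · exact (extends_coloring C h).congr fun t ht =>
        hz t (mem_of_mem_insert_of_ne (hC ht) (ne_of_mem_of_not_mem ht hbC))

theorem exists_obstructions_eq_empty_of_card_le_one
    (h : #(obstructions G T z b Z γ) + #(obstructions G T z b Y γ) ≤ 1) :
    ∃ X ⊆ Z \ Y, #X ≤ 1 ∧ obstructions G T z b (Z \ X) γ = ∅ := by
  rcases (obstructions G T z b Z γ).eq_empty_or_nonempty with hZ | ⟨o, ho⟩
  · exact ⟨∅, by simp, by simp, by simpa using hZ⟩
  have hpos := card_pos.2 ⟨o, ho⟩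
  have hoY : o ∉ obstructions G T z b Y γ := by
    rw [card_eq_zero.1 (by omega : #(obstructions G T z b Y γ) = 0)]
    exact notMem_empty o
  obtain ⟨hoC, hoZ⟩ := mem_filter.1 ho
  obtain ⟨x, hxo, hxY⟩ := not_subset.1 fun hsub => hoY (mem_filter.2 ⟨hoC, hsub⟩)
  refine ⟨{x}, by simp [hxY, hoZ hxo], by simp, eq_empty_of_forall_notMem fun o' ho' => ?_⟩
  obtain rfl : o' = o := card_le_one.1 (by omega : #(obstructions G T z b Z γ) ≤ 1)
    o' (obstructions_mono sdiff_subset ho') o ho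
  simpa using (mem_filter.1 ho').2 hxo

theorem sum_card_obstructions_le [Fintype α] {w : (outer G T).ConnectedComponent → ℕ}
    (hw : ∀ C, b ∈ attachments C → attachments C ⊆ insert b W →
      #{γ | ¬ Extends C (Function.update z b γ)} ≤ w C) :
    ∑ γ, #(obstructions G T z b W γ) ≤
      #(nbrsIn G W b) + ∑ C with b ∈ attachments C ∧ attachments C ⊆ insert b W, w C := by
  have hobs (γ : α) : obstructions G T z b W γ = {y ∈ nbrsIn G W b | z y = γ}.disjSum
      {C ∈ {C | b ∈ attachments C ∧ attachments C ⊆ insert b W} |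
        ¬ Extends C (Function.update z b γ)} := by
    ext (y | C) <;> simp [obstructions, conflicts, support, subset_insert_iff] <;> tauto
  simp only [hobs, card_disjSum, sum_add_distrib]
  refine Nat.add_le_add (card_eq_sum_card_fiberwise fun y _ => mem_coe.2 (mem_univ (z y))).ge ?_
  refine (sum_card_bipartiteAbove_eq_sum_card_bipartiteBelow fun γ C =>
    ¬ Extends C (Function.update z b γ)).trans_le (sum_le_sum fun C hC => ?_)
  exact hw C (mem_filter.1 hC).2.1 (mem_filter.1 hC).2.2

theorem sum_card_nbrsIn_verts (G : SimpleGraph V) (T : Finset V) (b : V) :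
    ∑ C : (outer G T).ConnectedComponent, #(nbrsIn G (verts C) b) = #(nbrsIn G Tᶜ b) := by
  simp only [nbrsIn, card_filter]
  exact sum_sum_verts G T _

theorem sum_card_obstructions_le_degree [Fintype α] (hdeg : ∀ v, G.degree v ≤ Fintype.card α)
    (hZ : Z ⊆ T) : ∑ γ, #(obstructions G T z b Z γ) ≤ G.degree b := calc
  ∑ γ, #(obstructions G T z b Z γ)
    _ ≤ #(nbrsIn G Z b) + ∑ C : (outer G T).ConnectedComponent with
          b ∈ attachments C ∧ attachments C ⊆ insert b Z, #(nbrsIn G (verts C) b) :=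
        sum_card_obstructions_le fun C hC _ => card_not_extends_le_card_nbrsIn hdeg hC z
    _ ≤ #(nbrsIn G Z b) + #(nbrsIn G Tᶜ b) := by
        rw [← sum_card_nbrsIn_verts]
        exact Nat.add_le_add_left (sum_le_sum_of_subset (subset_univ _)) _
    _ ≤ G.degree b := by
        rw [← card_nbrsIn_union (disjoint_compl_right.mono_left hZ)]
        exact card_nbrsIn_le_degree _ b

theorem sum_sum_card_obstructions_le [Fintype α] (hdeg : ∀ v, G.degree v ≤ Fintype.card α)
    (hT : ∀ t ∈ T, G.degree t < Fintype.card α) (ψ : G.Coloring α) (hU : U ⊆ T)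
    (hUY : Disjoint U Y) :
    ∑ b ∈ U, ∑ γ, #(obstructions G T z b Y γ) ≤ ∑ y ∈ Y, G.degree y := calc
  ∑ b ∈ U, ∑ γ, #(obstructions G T z b Y γ)
    _ ≤ ∑ b ∈ U, (#(nbrsIn G Y b) + ∑ C : (outer G T).ConnectedComponent with
          b ∈ attachments C ∧ attachments C ⊆ insert b Y, ∑ r ∈ verts C, #(nbrsIn G Y r)) :=
        sum_le_sum fun b _ => sum_card_obstructions_le fun C hb hC =>
          card_not_extends_le_sum hdeg hT ψ hb hC z
    _ ≤ ∑ b ∈ U, #(nbrsIn G Y b) + ∑ r ∈ Tᶜ, #(nbrsIn G Y r) := by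
        rw [sum_add_distrib, ← sum_sum_verts G T, ← sum_biUnion]
        · exact Nat.add_le_add_left (sum_le_sum_of_subset (subset_univ _)) _
        · refine fun b hb b' _ hne => disjoint_left.2 fun C hC hC' => ?_
          have hbb' := (mem_filter.1 hC').2.2 (mem_filter.1 hC).2.1
          exact disjoint_left.1 hUY hb (mem_of_mem_insert_of_ne hbb' hne)
    _ ≤ ∑ v, #(nbrsIn G Y v) := by
        rw [← sum_union (disjoint_compl_right.mono_left hU)]
        exact sum_le_sum_of_subset (subset_univ _)
    _ = ∑ y ∈ Y, G.degree y := by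
        rw [sum_card_nbrsIn_comm]
        exact sum_congr rfl fun y _ => card_nbrsIn_univ y

theorem exists_obstructions_sdiff_eq_empty [Fintype α] (hdeg : ∀ v, G.degree v ≤ Fintype.card α)
    (hT : ∀ t ∈ T, G.degree t < Fintype.card α) (ψ : G.Coloring α) (z : V → α) (hZ : Z ⊆ T)
    (hYZ : Y ⊆ Z) (hU : U ⊆ T) (hUZ : Disjoint U Z) {E : V → Finset α} {c : ℕ}
    (hE : ∀ b ∈ U, #(E b) ≤ c)
    (hcard : (Fintype.card α - 1) * #Y < #U * (Fintype.card α + 1 - 2 * c)) :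
    ∃ b ∈ U, ∃ γ ∉ E b, ∃ X ⊆ Z \ Y, #X ≤ 1 ∧ obstructions G T z b (Z \ X) γ = ∅ := by
  by_contra! hcon
  have htwo : ∀ b ∈ U, ∀ γ ∈ (E b)ᶜ,
      2 ≤ #(obstructions G T z b Z γ) + #(obstructions G T z b Y γ) := by
    intro b hb γ hγ
    by_contra! hlt
    obtain ⟨X, hX, hX1, hX0⟩ := exists_obstructions_eq_empty_of_card_le_one (Nat.le_of_lt_succ hlt)
    exact (hcon b hb γ (mem_compl.1 hγ) X hX hX1).ne_empty hX0
  have hlower : ∀ b ∈ U, Fintype.card α + 1 - 2 * c ≤ ∑ γ, #(obstructions G T z b Y γ) := by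
    intro b hb
    have hsum : #(E b)ᶜ * 2 ≤
        ∑ γ, #(obstructions G T z b Z γ) + ∑ γ, #(obstructions G T z b Y γ) := by
      rw [← sum_add_distrib]
      exact (card_nsmul_le_sum _ _ _ (htwo b hb)).trans (sum_le_sum_of_subset (subset_univ _))
    have := sum_card_obstructions_le_degree (z := z) (b := b) hdeg hZ
    have := hT b (hU hb)
    have := hE b hb
    rw [card_compl] at hsum
    omega
  refine hcard.not_ge ?_
  calc #U * (Fintype.card α + 1 - 2 * c)
    _ ≤ ∑ b ∈ U, ∑ γ, #(obstructions G T z b Y γ) := card_nsmul_le_sum _ _ _ hlower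
    _ ≤ ∑ y ∈ Y, G.degree y := sum_sum_card_obstructions_le hdeg hT ψ hU (hUZ.mono_right hYZ)
    _ ≤ #Y * (Fintype.card α - 1) := sum_le_card_nsmul _ _ _ fun y hy =>
        Nat.le_sub_one_of_lt (hT y (hZ (hYZ hy)))
    _ = (Fintype.card α - 1) * #Y := mul_comm _ _

end Obstructions

end Components

section Transversals

variable {V α ι : Type*} {G : SimpleGraph V} {P : ι → Finset V}
  {n : ι → ℕ} {A B W : Finset V} {I : Finset ι} {f z : V → α} {b : V} {γ : α} {i j : ι} {c : ℕ}

/-- Disjoint sets `P i` of vertices of degree less than the number of colours, of a size that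
suffices to find `n i ≤ c` colours on every `P i` in a suitable colouring of `G`. -/
structure IsDemand (α : Type*) [Fintype V] [Fintype α] (G : SimpleGraph V) (P : ι → Finset V)
    (n : ι → ℕ) (c : ℕ) : Prop where
  degree_le : ∀ v, G.degree v ≤ Fintype.card α
  degree_lt : ∀ i, ∀ v ∈ P i, G.degree v < Fintype.card α
  disjoint : Pairwise (Function.onFun Disjoint P)
  le : ∀ i, n i ≤ c
  two_le : 2 ≤ c
  card_le : ∀ i, 2 * n i + 3 ≤ #(P i)
  le_card : 2 * c * (c + 2) ≤ Fintype.card α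

theorem IsDemand.eq_of_mem [Fintype V] [Fintype α] (hP : IsDemand α G P n c) (hi : b ∈ P i)
    (hj : b ∈ P j) : i = j :=
  by_contra fun hij => disjoint_left.1 (hP.disjoint hij) hi hj

variable [Fintype ι]

/-- The set `A` picks at most `n i` vertices from every `P i`, to which `z` gives distinct colours,
and `z` extends from `A` to a colouring of `G`. -/
structure PartialTransversal (G : SimpleGraph V) (P : ι → Finset V) (n : ι → ℕ) (A : Finset V)
    (z : V → α) : Prop where
  subset : A ⊆ univ.biUnion P
  exists_coloring : ∃ h : G.Coloring α, ∀ a ∈ A, h a = z a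
  injOn : ∀ i, Set.InjOn z (A ∩ P i : Finset V)
  card_le : ∀ i, #(A ∩ P i) ≤ n i

theorem PartialTransversal.congr (hA : PartialTransversal G P n A z) (h : ∀ a ∈ A, f a = z a) :
    PartialTransversal G P n A f where
  subset := hA.subset
  exists_coloring := hA.exists_coloring.imp fun _ hg a ha => (hg a ha).trans (h a ha).symm
  injOn i := (hA.injOn i).congr fun a ha => (h a (mem_of_mem_inter_left ha)).symm
  card_le := hA.card_le

/-- A partial transversal `A'` inside `A ∪ B` of the size of `A` which leaves room in `P i`, and
which differs from `A` only in the sets `P j` with `j ∈ I`. -/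
structure IsExchange (G : SimpleGraph V) (P : ι → Finset V) (n : ι → ℕ) (A : Finset V)
    (I : Finset ι) (B : Finset V) (z : V → α) (i : ι) (A' : Finset V) : Prop where
  partialTransversal : PartialTransversal G P n A' z
  subset : A' ⊆ A ∪ B
  sdiff_subset : A \ I.biUnion P ⊆ A'
  card_eq : #A' = #A
  card_lt : #(A' ∩ P i) < n i
  inter_subset : A' ∩ P i ⊆ A

/-- The alternating structure grown from a partial transversal `A` coloured by `f`: the indices in
`I` have been reached, the vertices of `B` have been added to `A` and coloured by `z`, and for every
reached index `i` the transversal can be exchanged for one with room in `P i`. -/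
structure AlternatingTree (G : SimpleGraph V) (P : ι → Finset V) (n : ι → ℕ) (A : Finset V)
    (f : V → α) (I : Finset ι) (B : Finset V) (z : V → α) : Prop where
  card_add_one : #B + 1 = #I
  subset : B ⊆ I.biUnion P
  eqOn : ∀ a ∈ A, z a = f a
  exists_exchange : ∀ i ∈ I, ∃ A', IsExchange G P n A I B z i A'

theorem alternatingTree_singleton (hA : PartialTransversal G P n A f) (hi : #(A ∩ P i) < n i) :
    AlternatingTree G P n A f {i} ∅ f := by
  refine ⟨by simp, by simp, fun _ _ => rfl, fun j hj => ⟨A, hA, by simp, sdiff_subset, rfl, ?_,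
    inter_subset_left⟩⟩
  rwa [mem_singleton.1 hj]

theorem IsExchange.insert {A' : Finset V} (hA' : IsExchange G P n A I B z j A') (hb : b ∉ A ∪ B) :
    IsExchange G P n A (insert i I) (insert b B) (Function.update z b γ) j A' where
  partialTransversal := hA'.partialTransversal.congr fun _ ha =>
    Function.update_of_ne (ne_of_mem_of_not_mem (hA'.subset ha) hb) _ _
  subset := hA'.subset.trans (union_subset_union_right (subset_insert _ _))
  sdiff_subset := (sdiff_subset_sdiff subset_rfl
    (biUnion_subset_biUnion_of_subset_left P (subset_insert i I))).trans hA'.sdiff_subset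
  card_eq := hA'.card_eq
  card_lt := hA'.card_lt
  inter_subset := hA'.inter_subset

variable [Fintype V] [Fintype α]

theorem PartialTransversal.insert (hA : PartialTransversal G P n A z)
    (hP : IsDemand α G P n c) (hWA : W ⊆ A) (hbA : b ∉ A) (hbi : b ∈ P i)
    (hi : #(A ∩ P i) < n i) (hγ : ∀ a ∈ A ∩ P i, z a ≠ γ)
    (hobs : obstructions G (univ.biUnion P) z b W γ = ∅) :
    PartialTransversal G P n (insert b W) (Function.update z b γ) := by
  have hWP (j : ι) : W ∩ P j ⊆ A ∩ P j := inter_subset_inter_right hWA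
  have hinj (j : ι) : Set.InjOn (Function.update z b γ) (W ∩ P j : Finset V) :=
    ((hA.injOn j).mono (coe_subset.2 (hWP j))).congr fun a ha =>
      (Function.update_of_ne (ne_of_mem_of_not_mem (hWA (mem_of_mem_inter_left ha)) hbA) _ _).symm
  have hbP : b ∈ univ.biUnion P := mem_biUnion.2 ⟨i, mem_univ i, hbi⟩
  have hT : ∀ t ∈ univ.biUnion P, G.degree t < Fintype.card α := fun t ht => by
    obtain ⟨j, -, hj⟩ := mem_biUnion.1 ht
    exact hP.degree_lt j t hj
  obtain ⟨g, hg⟩ := hA.exists_coloring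
  refine ⟨insert_subset hbP (hWA.trans hA.subset),
    exists_coloring_of_obstructions_eq_empty hP.degree_le hT (hWA.trans hA.subset)
      (fun a ha => hg a (hWA ha)) hbP (fun h => hbA (hWA h)) hobs, fun j => ?_, fun j => ?_⟩
  all_goals by_cases hbj : b ∈ P j
  · obtain rfl := hP.eq_of_mem hbi hbj
    rw [insert_inter_of_mem hbj, coe_insert, Set.injOn_insert fun h =>
      hbA (hWA (mem_of_mem_inter_left (mem_coe.1 h)))]
    refine ⟨hinj i, ?_⟩
    rintro ⟨a, ha, hab⟩
    have haA := hWP i ha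
    rw [Function.update_self,
      Function.update_of_ne (ne_of_mem_of_not_mem (mem_of_mem_inter_left haA) hbA)] at hab
    exact hγ a haA hab
  · rw [insert_inter_of_notMem hbj]
    exact hinj j
  · obtain rfl := hP.eq_of_mem hbi hbj
    rw [insert_inter_of_mem hbj]
    exact (card_insert_le _ _).trans ((card_le_card (hWP i)).trans_lt hi)
  · rw [insert_inter_of_notMem hbj]
    exact (card_le_card (hWP j)).trans (hA.card_le j)

theorem mul_lt_mul_of_demand {K c s m t u : ℕ} (hc : 2 ≤ c) (hK : 2 * c * (c + 2) ≤ K)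
    (hs : s ≤ (m + 1) * c) (ht : t ≤ s + m) (hu : s + 2 * m + 3 ≤ u) :
    (K - 1) * t < u * (K + 1 - 2 * c) := by
  obtain ⟨e, rfl⟩ := Nat.exists_eq_add_of_le hK
  obtain ⟨d, rfl⟩ := Nat.exists_eq_add_of_le hc
  have hbase : 2 * (2 + d) * (2 + d + 2) = 2 * d ^ 2 + 12 * d + 16 := by ring
  have hK1 : 2 * (2 + d) * (2 + d + 2) + e - 1 = 2 * d ^ 2 + 12 * d + 15 + e := by omega
  have hK2 : 2 * (2 + d) * (2 + d + 2) + e + 1 - 2 * (2 + d) = 2 * d ^ 2 + 10 * d + 13 + e := by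
    omega
  rw [hK1, hK2]
  calc (2 * d ^ 2 + 12 * d + 15 + e) * t
    _ ≤ (2 * d ^ 2 + 12 * d + 15 + e) * (s + m) := Nat.mul_le_mul_left _ ht
    _ < (s + 2 * m + 3) * (2 * d ^ 2 + 10 * d + 13 + e) := by
        nlinarith [Nat.mul_le_mul_left (2 * d + 2) hs, Nat.zero_le (e * m),
          Nat.zero_le (d ^ 2 * m), Nat.zero_le (d * m)]
    _ ≤ u * (2 * d ^ 2 + 10 * d + 13 + e) := Nat.mul_le_mul_right _ hu

theorem AlternatingTree.card_lt (h : AlternatingTree G P n A f I B z)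
    (hP : IsDemand α G P n c) (hA : ∀ i, #(A ∩ P i) ≤ n i) :
    (Fintype.card α - 1) * #(A ∩ I.biUnion P ∪ B) <
      #(I.biUnion P \ (A ∪ B)) * (Fintype.card α + 1 - 2 * c) := by
  have hAI : #(A ∩ I.biUnion P) ≤ ∑ i ∈ I, n i := by
    rw [inter_biUnion]
    exact card_biUnion_le.trans (sum_le_sum fun i _ => hA i)
  have hI : 2 * ∑ i ∈ I, n i + #I * 3 ≤ #(I.biUnion P) := by
    rw [card_biUnion fun i _ j _ hij => hP.disjoint hij, mul_sum, ← smul_eq_mul #I,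
      ← sum_const, ← sum_add_distrib]
    exact sum_le_sum fun i _ => hP.card_le i
  have hsplit : #(I.biUnion P) ≤ #(I.biUnion P \ (A ∪ B)) + #(A ∩ I.biUnion P ∪ B) := by
    refine (card_le_card fun x hx => ?_).trans (card_union_le _ _)
    simp only [mem_union, mem_sdiff, mem_inter]
    tauto
  have hunion := card_union_le (A ∩ I.biUnion P) B
  have hcard := h.card_add_one
  refine mul_lt_mul_of_demand (s := ∑ i ∈ I, n i) (m := #B) hP.two_le hP.le_card ?_
    (by omega) (by omega)
  rw [hcard, ← smul_eq_mul]
  exact sum_le_card_nsmul _ _ _ fun i _ => hP.le i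

theorem AlternatingTree.exists_obstructions_eq_empty
    (h : AlternatingTree G P n A f I B z) (hP : IsDemand α G P n c)
    (hA : PartialTransversal G P n A f) :
    ∃ i ∈ I, ∃ b ∈ P i, b ∉ A ∪ B ∧ ∃ γ, (∀ a ∈ A ∩ P i, f a ≠ γ) ∧ ∃ X ⊆ A \ I.biUnion P,
      #X ≤ 1 ∧ obstructions G (univ.biUnion P) z b ((A ∪ B) \ X) γ = ∅ := by
  have hIP : I.biUnion P ⊆ univ.biUnion P := biUnion_subset_biUnion_of_subset_left P (subset_univ I)
  set E : V → Finset α := fun b => {a ∈ A | ∃ i, a ∈ P i ∧ b ∈ P i}.image f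
  have hEc : ∀ b ∈ I.biUnion P \ (A ∪ B), #(E b) ≤ c := by
    intro b hb
    obtain ⟨i, -, hbi⟩ := mem_biUnion.1 (mem_sdiff.1 hb).1
    refine card_image_le.trans ((card_le_card fun a ha => ?_).trans
      ((hA.card_le i).trans (hP.le i)))
    obtain ⟨haA, j, haj, hbj⟩ := mem_filter.1 ha
    exact mem_inter.2 ⟨haA, hP.eq_of_mem hbj hbi ▸ haj⟩
  obtain ⟨ψ, -⟩ := hA.exists_coloring
  obtain ⟨b, hb, γ, hγ, X, hX, hX1, hobs⟩ := exists_obstructions_sdiff_eq_empty hP.degree_le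
    (fun t ht => by
      obtain ⟨j, -, hj⟩ := mem_biUnion.1 ht
      exact hP.degree_lt j t hj) ψ z
    (union_subset hA.subset (h.subset.trans hIP)) (union_subset_union_left inter_subset_left)
    (sdiff_subset.trans hIP) sdiff_disjoint hEc (h.card_lt hP hA.card_le)
  obtain ⟨hbI, hbAB⟩ := mem_sdiff.1 hb
  obtain ⟨i, hi, hbi⟩ := mem_biUnion.1 hbI
  refine ⟨i, hi, b, hbi, hbAB, γ, fun a ha hfa => hγ ?_, X, fun x hx => ?_, hX1, hobs⟩
  · exact mem_image.2
      ⟨a, mem_filter.2 ⟨mem_of_mem_inter_left ha, i, mem_of_mem_inter_right ha, hbi⟩, hfa⟩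
  · have := hX hx
    simp only [mem_sdiff, mem_union, mem_inter] at this ⊢
    tauto

theorem AlternatingTree.isExchange_insert (h : AlternatingTree G P n A f I B z)
    (hP : IsDemand α G P n c) {A' : Finset V} (hA' : IsExchange G P n A I B z i A') (hi : i ∈ I)
    (hbi : b ∈ P i) (hb : b ∉ A ∪ B) {x : V} (hxA : x ∈ A) (hxj : x ∈ P j) (hj : j ∉ I)
    (hnew : PartialTransversal G P n (insert b (A'.erase x)) (Function.update z b γ)) :
    IsExchange G P n A (insert j I) (insert b B) (Function.update z b γ) j
      (insert b (A'.erase x)) := by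
  have hxI : x ∉ I.biUnion P := fun hx => by
    obtain ⟨k, hk, hxk⟩ := mem_biUnion.1 hx
    exact hj (hP.eq_of_mem hxk hxj ▸ hk)
  have hxA' : x ∈ A' := hA'.sdiff_subset (mem_sdiff.2 ⟨hxA, hxI⟩)
  have hbj : b ∉ P j := fun hbj => hj (hP.eq_of_mem hbi hbj ▸ hi)
  have hinter : insert b (A'.erase x) ∩ P j = (A' ∩ P j).erase x := by
    rw [insert_inter_of_notMem hbj, erase_inter]
  have hbA' : b ∉ A' := fun h => hb (hA'.subset h)
  refine ⟨hnew, ?_, fun y hy => ?_, ?_, ?_, ?_⟩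
  · rw [union_insert]
    exact insert_subset_insert b ((erase_subset x A').trans hA'.subset)
  · rw [biUnion_insert, mem_sdiff, mem_union, not_or] at hy
    exact mem_insert_of_mem (mem_erase.2 ⟨fun hyx => hy.2.1 (hyx ▸ hxj),
      hA'.sdiff_subset (mem_sdiff.2 ⟨hy.1, hy.2.2⟩)⟩)
  · rw [card_insert_of_notMem fun h => hbA' (mem_of_mem_erase h), card_erase_add_one hxA',
      hA'.card_eq]
  · rw [hinter]
    exact (card_erase_lt_of_mem (mem_inter.2 ⟨hxA', hxj⟩)).trans_le
      (hA'.partialTransversal.card_le j)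
  · rw [hinter]
    intro y hy
    obtain ⟨hyA', hyj⟩ := mem_inter.1 (mem_of_mem_erase hy)
    refine (mem_union.1 (hA'.subset hyA')).resolve_right fun hyB => hj ?_
    obtain ⟨k, hk, hyk⟩ := mem_biUnion.1 (h.subset hyB)
    exact hP.eq_of_mem hyk hyj ▸ hk

theorem AlternatingTree.exists_card_add_one (h : AlternatingTree G P n A f I B z)
    (hP : IsDemand α G P n c) (hA : PartialTransversal G P n A f)
    (hmax : ∀ A' (g : V → α), PartialTransversal G P n A' g → #A' ≤ #A) :
    ∃ I' B' z', AlternatingTree G P n A f I' B' z' ∧ #I' = #I + 1 := by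
  obtain ⟨i, hi, b, hbi, hb, γ, hγ, X, hXA, hX1, hobs⟩ := h.exists_obstructions_eq_empty hP hA
  obtain ⟨A', hA'⟩ := h.exists_exchange i hi
  have hbA' : b ∉ A' := fun hbA' => hb (hA'.subset hbA')
  have hnew : PartialTransversal G P n (insert b (A' \ X)) (Function.update z b γ) := by
    refine hA'.partialTransversal.insert hP sdiff_subset hbA' hbi hA'.card_lt (fun a ha => ?_)
      (subset_empty.1 ?_)
    · have haA := hA'.inter_subset ha
      rw [h.eqOn a haA]
      exact hγ a (mem_inter.2 ⟨haA, mem_of_mem_inter_right ha⟩)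
    · rw [← hobs]
      exact obstructions_mono (sdiff_subset_sdiff hA'.subset subset_rfl)
  rcases Nat.le_one_iff_eq_zero_or_eq_one.1 hX1 with hX | hX
  · have := hmax _ _ hnew
    rw [card_eq_zero.1 hX, sdiff_empty, card_insert_of_notMem hbA', hA'.card_eq] at this
    omega
  obtain ⟨x, rfl⟩ := card_eq_one.1 hX
  rw [sdiff_singleton_eq_erase] at hnew
  obtain ⟨hxA, hxI⟩ := mem_sdiff.1 (singleton_subset_iff.1 hXA)
  obtain ⟨j, -, hxj⟩ := mem_biUnion.1 (hA.subset hxA)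
  have hj : j ∉ I := fun hj => hxI (mem_biUnion.2 ⟨j, hj, hxj⟩)
  rw [mem_union, not_or] at hb
  refine ⟨insert j I, insert b B, Function.update z b γ, ⟨?_, ?_, fun a ha => ?_, ?_⟩,
    card_insert_of_notMem hj⟩
  · rw [card_insert_of_notMem hj, card_insert_of_notMem hb.2, h.card_add_one]
  · rw [biUnion_insert]
    exact (insert_subset (mem_biUnion.2 ⟨i, hi, hbi⟩) h.subset).trans subset_union_right
  · rw [Function.update_of_ne (ne_of_mem_of_not_mem ha hb.1), h.eqOn a ha]
  · rw [← not_or, ← mem_union] at hb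
    exact (forall_mem_insert _ _ _).2
      ⟨⟨_, h.isExchange_insert hP hA' hi hbi hb hxA hxj hj hnew⟩,
        fun k hk => (h.exists_exchange k hk).imp fun A'' hA'' => hA''.insert hb⟩

omit [Fintype ι] in
theorem IsDemand.exists_coloring [Finite ι] (hP : IsDemand α G P n c) (ψ : G.Coloring α) :
    ∃ f : G.Coloring α, ∀ i, n i ≤ #((P i).image f) := by
  cases nonempty_fintype ι
  obtain ⟨A, hA, hmax⟩ := exists_max_image
    {A : Finset V | ∃ z : V → α, PartialTransversal G P n A z} card
    ⟨∅, by simpa using ⟨ψ, by simp, ⟨ψ, by simp⟩, by simp, by simp⟩⟩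
  obtain ⟨z, hz⟩ := (mem_filter.1 hA).2
  obtain ⟨f, hfz⟩ := hz.exists_coloring
  have hf : PartialTransversal G P n A f := hz.congr hfz
  refine ⟨f, fun i => ?_⟩
  by_contra! hlt
  have hi : #(A ∩ P i) < n i := by
    rw [← card_image_of_injOn (hf.injOn i)]
    exact (card_le_card (image_subset_image inter_subset_right)).trans_lt hlt
  have htree (m : ℕ) : ∃ I B w, AlternatingTree G P n A f I B w ∧ #I = m + 1 := by
    induction m with
    | zero => exact ⟨{i}, ∅, f, alternatingTree_singleton hf hi, rfl⟩
    | succ m ih =>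
      obtain ⟨I, B, w, hI, hm⟩ := ih
      rw [← hm]
      exact hI.exists_card_add_one hP hf fun A' g hg =>
        hmax A' (mem_filter.2 ⟨mem_univ A', g, hg⟩)
  obtain ⟨I, -, -, -, hI⟩ := htree (Fintype.card ι)
  have := card_le_univ I
  omega

end Transversals

section Classes

variable {V α J : Type*} {G : SimpleGraph V} {κ : V → J} {v w x : V} {j : J}
  [Fintype V]

/-- The set of values of `κ` on the neighbours of `v`. -/
def seen (G : SimpleGraph V) (κ : V → J) (v : V) : Finset J :=
  (G.neighborFinset v).image κ

theorem mem_seen : j ∈ seen G κ v ↔ ∃ w, G.Adj v w ∧ κ w = j := by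
  simp [seen]

/-- The neighbours of `v` on which `κ` takes the value `j`. -/
def nbrsOfClass (G : SimpleGraph V) (κ : V → J) (j : J) (v : V) : Finset V :=
  {w ∈ G.neighborFinset v | κ w = j}

theorem mem_nbrsOfClass : w ∈ nbrsOfClass G κ j v ↔ G.Adj v w ∧ κ w = j := by
  simp [nbrsOfClass]

theorem nbrsOfClass_eq_empty_iff : nbrsOfClass G κ j v = ∅ ↔ j ∉ seen G κ v := by
  simp [eq_empty_iff_forall_notMem, mem_nbrsOfClass, mem_seen]

theorem sum_card_nbrsOfClass [Fintype J] (G : SimpleGraph V) (κ : V → J) (v : V) :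
    ∑ j, #(nbrsOfClass G κ j v) = G.degree v :=
  (card_eq_sum_card_fiberwise fun _ _ => mem_coe.2 (mem_univ _)).symm

theorem exists_degree_le_card_seen_mul [Nonempty J] (G : SimpleGraph V) (κ : V → J)
    (v : V) : ∃ j, G.degree v ≤ #(seen G κ v) * #(nbrsOfClass G κ j v) := by
  have hsum : ∑ j ∈ seen G κ v, #(nbrsOfClass G κ j v) = G.degree v :=
    (card_eq_sum_card_image κ _).symm
  obtain hempty | hne := (seen G κ v).eq_empty_or_nonempty
  · refine ⟨Classical.arbitrary J, hsum.ge.trans ?_⟩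
    rw [hempty, sum_empty]
    exact Nat.zero_le _
  · obtain ⟨j, -, hj⟩ := exists_max_image (seen G κ v) (fun j => #(nbrsOfClass G κ j v)) hne
    exact ⟨j, hsum.ge.trans (sum_le_card_nsmul _ _ _ hj)⟩

/-- The number of colours of class `j`. -/
def classSize [Fintype α] (pal : α → J) (j : J) : ℕ :=
  #{a | pal a = j}

theorem sum_classSize [Fintype α] [Fintype J] (pal : α → J) :
    ∑ j, classSize pal j = Fintype.card α :=
  (card_eq_sum_card_fiberwise fun _ _ => mem_coe.2 (mem_univ _)).symm

theorem classSize_pos [Fintype α] {pal : α → J} {a : α} (ha : pal a = j) : 0 < classSize pal j :=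
  card_pos.2 ⟨a, mem_filter.2 ⟨mem_univ a, ha⟩⟩

/-- The neighbours of `x` that do not see at least two of the classes. -/
def deficient [Fintype J] (G : SimpleGraph V) (κ : V → J) (x : V) : Finset V :=
  {w ∈ G.neighborFinset x | #(seen G κ w) + 1 < Fintype.card J}

theorem deficient_subset [Fintype J] : deficient G κ x ⊆ G.neighborFinset x :=
  filter_subset _ _

theorem exists_notMem_seen_of_mem_deficient [Fintype J] {pal : α → J}
    (hpal : Function.Surjective pal)
    (hv : v ∈ deficient G κ x) (l : J) : ∃ a, pal a ∉ seen G κ v ∧ pal a ≠ l := by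
  obtain ⟨l', -, hl'⟩ : ∃ l' ∈ univ, l' ∉ insert l (seen G κ v) :=
    exists_mem_notMem_of_card_lt_card ((card_insert_le _ _).trans_lt (mem_filter.1 hv).2)
  obtain ⟨a, rfl⟩ := hpal l'
  rw [mem_insert, not_or] at hl'
  exact ⟨a, hl'.2, hl'.1⟩

end Classes

section Weight

variable {V J : Type*} {G : SimpleGraph V} {size : J → ℕ} {κ : V → J} {u : V}

/-- The weight of the pair `a`, `b` under a partition `κ` of the vertices into classes: it is the
inverse of the size of the class if `a` and `b` are adjacent vertices of the same class. -/
def pairWeight (G : SimpleGraph V) (size : J → ℕ) (κ : V → J) (a b : V) : ℚ :=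
  if G.Adj a b ∧ κ a = κ b then (size (κ a) : ℚ)⁻¹ else 0

theorem pairWeight_comm (a b : V) : pairWeight G size κ a b = pairWeight G size κ b a := by
  unfold pairWeight
  by_cases h : G.Adj a b ∧ κ a = κ b
  · rw [if_pos h, if_pos ⟨h.1.symm, h.2.symm⟩, h.2]
  · rw [if_neg h, if_neg fun h' => h ⟨h'.1.symm, h'.2.symm⟩]

variable [Fintype V]

theorem sum_pairWeight (u : V) :
    ∑ b, pairWeight G size κ u b = #(nbrsOfClass G κ (κ u) u) / (size (κ u) : ℚ) := by
  simp only [pairWeight]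
  rw [← sum_filter, sum_const, nsmul_eq_mul, ← div_eq_mul_inv]
  congr 3
  ext b
  rw [mem_filter_univ, mem_nbrsOfClass, eq_comm (a := κ u)]

/-- Twice the total weight of the edges inside the classes of `κ`. -/
def totalWeight (G : SimpleGraph V) (size : J → ℕ) (κ : V → J) : ℚ :=
  ∑ a, ∑ b, pairWeight G size κ a b

theorem totalWeight_eq (u : V) :
    totalWeight G size κ =
      ∑ a ∈ univ.erase u, ∑ b ∈ univ.erase u, pairWeight G size κ a b +
        2 * (#(nbrsOfClass G κ (κ u) u) / (size (κ u) : ℚ)) := by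
  have hsplit (g : V → ℚ) : ∑ a, g a = g u + ∑ a ∈ univ.erase u, g a :=
    (add_sum_erase _ _ (mem_univ u)).symm
  have huu : pairWeight G size κ u u = 0 := if_neg fun h => G.irrefl h.1
  have hrest : ∑ a ∈ univ.erase u, ∑ b, pairWeight G size κ a b =
      ∑ a ∈ univ.erase u, pairWeight G size κ u a +
        ∑ a ∈ univ.erase u, ∑ b ∈ univ.erase u, pairWeight G size κ a b := by
    rw [← sum_add_distrib]
    exact sum_congr rfl fun a _ => by rw [hsplit, pairWeight_comm]
  rw [totalWeight, hsplit, hrest, ← sum_pairWeight, hsplit, huu]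
  ring

theorem totalWeight_update (u : V) (j : J) :
    totalWeight G size (Function.update κ u j) - totalWeight G size κ =
      2 * (#(nbrsOfClass G κ j u) / (size j : ℚ) -
        #(nbrsOfClass G κ (κ u) u) / (size (κ u) : ℚ)) := by
  have hne {a : V} (ha : a ≠ u) : Function.update κ u j a = κ a := Function.update_of_ne ha _ _
  have hrest : ∑ a ∈ univ.erase u, ∑ b ∈ univ.erase u,
      pairWeight G size (Function.update κ u j) a b =
        ∑ a ∈ univ.erase u, ∑ b ∈ univ.erase u, pairWeight G size κ a b :=
    sum_congr rfl fun a ha => sum_congr rfl fun b hb => by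
      rw [pairWeight, hne (ne_of_mem_erase ha), hne (ne_of_mem_erase hb), pairWeight]
  have hnbrs : nbrsOfClass G (Function.update κ u j) j u = nbrsOfClass G κ j u :=
    filter_congr fun w hw => by rw [hne ((G.mem_neighborFinset u w).1 hw).ne']
  rw [totalWeight_eq u, totalWeight_eq u, hrest, Function.update_self, hnbrs]
  ring

end Weight

section Optimal

variable {V α J : Type*} [Fintype V] [Fintype α] {G : SimpleGraph V} {pal : α → J}
  {f : G.Coloring α} {A : Finset V} {u v x : V} {j l : J}

/-- The colouring `f` minimises the total weight of the edges inside the classes of colours, for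
the partition of the colours into classes given by `pal`. -/
def IsOptimal (pal : α → J) (f : G.Coloring α) : Prop :=
  ∀ g : G.Coloring α,
    totalWeight G (classSize pal) (pal ∘ f) ≤ totalWeight G (classSize pal) (pal ∘ g)

theorem exists_isOptimal (pal : α → J) (f : G.Coloring α) :
    ∃ g : G.Coloring α, IsOptimal pal g :=
  have : Nonempty (G.Coloring α) := ⟨f⟩
  have : Finite (G.Coloring α) := DFunLike.finite _
  Finite.exists_min fun g : G.Coloring α => totalWeight G (classSize pal) (pal ∘ g)

theorem IsOptimal.card_nbrsOfClass_mul_le (hf : IsOptimal pal f)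
    (h : #(nbrsOfClass G (pal ∘ f) j u) < classSize pal j) :
    #(nbrsOfClass G (pal ∘ f) (pal (f u)) u) * classSize pal j ≤
      #(nbrsOfClass G (pal ∘ f) j u) * classSize pal (pal (f u)) := by
  obtain ⟨a, ha, haf⟩ : ∃ a ∈ ({a | pal a = j} : Finset α),
      a ∉ (nbrsOfClass G (pal ∘ f) j u).image f :=
    exists_mem_notMem_of_card_lt_card (card_image_le.trans_lt h)
  rw [mem_filter_univ] at ha
  have hau {w : V} (huw : G.Adj u w) : f w ≠ a := fun hw =>
    haf (mem_image.2 ⟨w, mem_nbrsOfClass.2 ⟨huw, by rw [Function.comp_apply, hw, ha]⟩, hw⟩)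
  have hg {v w : V} (hvw : G.Adj v w) : Function.update f u a v ≠ Function.update f u a w := by
    rcases eq_or_ne v u with rfl | hv
    · rw [Function.update_self, Function.update_of_ne hvw.ne']
      exact (hau hvw).symm
    · rcases eq_or_ne w u with rfl | hw
      · rw [Function.update_self, Function.update_of_ne hv]
        exact hau hvw.symm
      · rw [Function.update_of_ne hv, Function.update_of_ne hw]
        exact f.valid hvw
  have hle : totalWeight G (classSize pal) (pal ∘ f) ≤
      totalWeight G (classSize pal) (pal ∘ Function.update f u a) := hf (.mk _ hg)
  rw [← sub_nonneg, Function.comp_update, ha, totalWeight_update, Function.comp_apply] at hle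
  have hdiv := sub_nonneg.1 (nonneg_of_mul_nonneg_right hle two_pos)
  rw [div_le_div_iff₀ (mod_cast classSize_pos rfl) (mod_cast classSize_pos ha)] at hdiv
  exact_mod_cast hdiv

theorem IsOptimal.card_nbrsOfClass_self_le [Finite J] (hf : IsOptimal pal f)
    (hdeg : G.degree v ≤ Fintype.card α) :
    #(nbrsOfClass G (pal ∘ f) (pal (f v)) v) ≤ classSize pal (pal (f v)) := by
  cases nonempty_fintype J
  by_contra! hlt
  have hle (j : J) : classSize pal j ≤ #(nbrsOfClass G (pal ∘ f) j v) := by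
    by_contra! hj
    have := hf.card_nbrsOfClass_mul_le hj
    nlinarith
  refine hdeg.not_gt ?_
  rw [← sum_classSize pal, ← sum_card_nbrsOfClass G (pal ∘ f) v]
  exact sum_lt_sum (fun j _ => hle j) ⟨_, mem_univ _, hlt⟩

theorem IsOptimal.notMem_seen (hf : IsOptimal pal f) (hpal : Function.Surjective pal)
    (hl : l ∉ seen G (pal ∘ f) v) : pal (f v) ∉ seen G (pal ∘ f) v := by
  obtain ⟨a, ha⟩ := hpal l
  have hempty := nbrsOfClass_eq_empty_iff.2 hl
  have hle := hf.card_nbrsOfClass_mul_le (u := v) (j := l) (by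
    rw [hempty]
    exact classSize_pos ha)
  rw [hempty, card_empty, zero_mul, Nat.le_zero, Nat.mul_eq_zero] at hle
  exact nbrsOfClass_eq_empty_iff.1 (card_eq_zero.1 (hle.resolve_right (classSize_pos ha).ne'))

theorem IsOptimal.exists_piecewise (hf : IsOptimal pal f)
    (hindep : ∀ v ∈ A, ∀ w ∈ A, ¬ G.Adj v w) (hA : ∀ v ∈ A, pal (f v) ∉ seen G (pal ∘ f) v)
    {r : V → α} (hr : ∀ v ∈ A, pal (r v) ∉ seen G (pal ∘ f) v) :
    ∃ g : G.Coloring α, IsOptimal pal g ∧ ⇑g = A.piecewise r f := by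
  have hfne {v w : V} (hvw : G.Adj v w) (hv : v ∈ A) : pal (f v) ≠ pal (f w) := fun h =>
    hA v hv (mem_seen.2 ⟨w, hvw, h.symm⟩)
  have hgne {v w : V} (hvw : G.Adj v w) (hv : v ∈ A) :
      pal (A.piecewise r f v) ≠ pal (A.piecewise r f w) := fun h => by
    rw [piecewise_eq_of_mem _ _ _ hv,
      piecewise_eq_of_notMem _ _ _ fun hw => hindep v hv w hw hvw] at h
    exact hr v hv (mem_seen.2 ⟨w, hvw, h.symm⟩)
  have hproper {v w : V} (hvw : G.Adj v w) : A.piecewise r f v ≠ A.piecewise r f w := by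
    by_cases hv : v ∈ A
    · exact ne_of_apply_ne pal (hgne hvw hv)
    by_cases hw : w ∈ A
    · exact (ne_of_apply_ne pal (hgne hvw.symm hw)).symm
    rw [piecewise_eq_of_notMem _ _ _ hv, piecewise_eq_of_notMem _ _ _ hw]
    exact f.valid hvw
  have hweight (a b : V) : pairWeight G (classSize pal) (pal ∘ A.piecewise r f) a b =
      pairWeight G (classSize pal) (pal ∘ f) a b := by
    unfold pairWeight
    by_cases hab : G.Adj a b
    · by_cases ha : a ∈ A
      · rw [if_neg fun h => hgne hab ha h.2, if_neg fun h => hfne hab ha h.2]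
      by_cases hb : b ∈ A
      · rw [if_neg fun h => hgne hab.symm hb h.2.symm, if_neg fun h => hfne hab.symm hb h.2.symm]
      simp only [Function.comp_apply, piecewise_eq_of_notMem _ _ _ ha,
        piecewise_eq_of_notMem _ _ _ hb]
    · rw [if_neg fun h => hab h.1, if_neg fun h => hab h.1]
  refine ⟨.mk _ hproper, fun g => le_of_eq_of_le ?_ (hf g), rfl⟩
  exact sum_congr rfl fun a _ => sum_congr rfl fun b _ => hweight a b

variable [Fintype J]

theorem IsOptimal.notMem_seen_of_mem_deficient (hf : IsOptimal pal f)
    (hpal : Function.Surjective pal) (hv : v ∈ deficient G (pal ∘ f) x) :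
    pal (f v) ∉ seen G (pal ∘ f) v := by
  obtain ⟨l, -, hl⟩ : ∃ l ∈ univ, l ∉ seen G (pal ∘ f) v :=
    exists_mem_notMem_of_card_lt_card ((Nat.lt_succ_self _).trans (mem_filter.1 hv).2)
  exact hf.notMem_seen hpal hl

theorem IsOptimal.exists_nbrsOfClass_eq_sdiff (hf : IsOptimal pal f)
    (hpal : Function.Surjective pal) (hl : l ≠ pal (f x)) :
    ∃ g : G.Coloring α, IsOptimal pal g ∧ g x = f x ∧
      nbrsOfClass G (pal ∘ g) l x = nbrsOfClass G (pal ∘ f) l x \ deficient G (pal ∘ f) x ∧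
      nbrsOfClass G (pal ∘ g) (pal (f x)) x = nbrsOfClass G (pal ∘ f) (pal (f x)) x := by
  set A := nbrsOfClass G (pal ∘ f) l x ∩ deficient G (pal ∘ f) x
  have hAl {w : V} (hw : w ∈ A) : G.Adj x w ∧ pal (f w) = l :=
    mem_nbrsOfClass.1 (mem_of_mem_inter_left hw)
  have hA (w) (hw : w ∈ A) : pal (f w) ∉ seen G (pal ∘ f) w :=
    hf.notMem_seen_of_mem_deficient hpal (mem_of_mem_inter_right hw)
  have hnew (w) (hw : w ∈ A) : ∃ a, pal a ∉ seen G (pal ∘ f) w ∧ pal a ≠ l :=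
    exists_notMem_seen_of_mem_deficient hpal (mem_of_mem_inter_right hw) l
  have : Nonempty α := ⟨f x⟩
  choose! r hr hrl using hnew
  obtain ⟨g, hg, hgf⟩ := hf.exists_piecewise (fun v hv w hw hvw => hA v hv
    (mem_seen.2 ⟨w, hvw, (hAl hw).2.trans (hAl hv).2.symm⟩)) hA hr
  have hgA {w : V} (hw : w ∈ A) : g w = r w := by rw [hgf, piecewise_eq_of_mem _ _ _ hw]
  have hgA' {w : V} (hw : w ∉ A) : g w = f w := by rw [hgf, piecewise_eq_of_notMem _ _ _ hw]
  refine ⟨g, hg, hgA' fun hx => G.irrefl (hAl hx).1, ?_, ?_⟩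
  · ext w
    rw [mem_sdiff, mem_nbrsOfClass, mem_nbrsOfClass, Function.comp_apply, Function.comp_apply]
    by_cases hw : w ∈ A
    · simp [hgA hw, hrl w hw, mem_of_mem_inter_right hw]
    · rw [hgA' hw]
      refine (and_iff_left_of_imp fun h hwd => hw ?_).symm
      exact mem_inter.2 ⟨mem_nbrsOfClass.2 h, hwd⟩
  · refine filter_congr fun w _ => ?_
    rw [Function.comp_apply, Function.comp_apply]
    by_cases hw : w ∈ A
    · refine iff_of_false (fun h => hr w hw (mem_seen.2 ⟨x, (hAl hw).1.symm, ?_⟩)) fun h => ?_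
      · rw [Function.comp_apply, ← h, hgA hw]
      · exact hl ((hAl hw).2.symm.trans h)
    · rw [hgA' hw]

theorem IsOptimal.card_nbrsOfClass_mul_le_sdiff (hf : IsOptimal pal f)
    (hpal : Function.Surjective pal) (hdeg : G.degree x ≤ Fintype.card α) (l : J) :
    #(nbrsOfClass G (pal ∘ f) (pal (f x)) x) * classSize pal l ≤
      #(nbrsOfClass G (pal ∘ f) l x \ deficient G (pal ∘ f) x) * classSize pal (pal (f x)) := by
  rcases eq_or_ne l (pal (f x)) with rfl | hl
  · rw [sdiff_eq_self_of_disjoint]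
    refine disjoint_left.2 fun w hw hwd => hf.notMem_seen_of_mem_deficient hpal hwd ?_
    obtain ⟨hxw, hw⟩ := mem_nbrsOfClass.1 hw
    exact mem_seen.2 ⟨x, hxw.symm, hw.symm⟩
  rcases le_or_gt (classSize pal l) #(nbrsOfClass G (pal ∘ f) l x \ deficient G (pal ∘ f) x)
    with hle | hlt
  · rw [mul_comm]
    exact Nat.mul_le_mul hle (hf.card_nbrsOfClass_self_le hdeg)
  · obtain ⟨g, hg, hgx, hgl, hgself⟩ := hf.exists_nbrsOfClass_eq_sdiff hpal hl
    rw [← hgl] at hlt ⊢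
    have := hg.card_nbrsOfClass_mul_le hlt
    rwa [hgx, hgself] at this

/-- The number of colours of the class of `x` minus the number of neighbours of `x` in that class,
which is nonnegative for an optimal colouring. -/
def slack (pal : α → J) (f : G.Coloring α) (x : V) : ℕ :=
  classSize pal (pal (f x)) - #(nbrsOfClass G (pal ∘ f) (pal (f x)) x)

theorem IsOptimal.card_deficient_mul_le (hf : IsOptimal pal f) (hpal : Function.Surjective pal)
    (hdeg : G.degree x ≤ Fintype.card α) :
    #(deficient G (pal ∘ f) x) * classSize pal (pal (f x)) ≤ slack pal f x * Fintype.card α := by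
  have hsum := sum_le_sum fun l (_ : l ∈ univ) => hf.card_nbrsOfClass_mul_le_sdiff hpal hdeg l
  have hfiber : ∑ l, #(nbrsOfClass G (pal ∘ f) l x \ deficient G (pal ∘ f) x) =
      #(G.neighborFinset x \ deficient G (pal ∘ f) x) := by
    rw [card_eq_sum_card_fiberwise (f := pal ∘ f) fun _ _ => mem_coe.2 (mem_univ _)]
    exact sum_congr rfl fun l _ => congrArg card (by
      ext w
      rw [mem_sdiff, nbrsOfClass, mem_filter, mem_filter, mem_sdiff]
      tauto)
  rw [← mul_sum, ← sum_mul, sum_classSize, hfiber, card_sdiff_of_subset deficient_subset,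
    G.card_neighborFinset_eq_degree] at hsum
  have hle := card_le_card (deficient_subset (G := G) (κ := pal ∘ f) (x := x))
  rw [G.card_neighborFinset_eq_degree] at hle
  have hself := hf.card_nbrsOfClass_self_le hdeg
  rw [slack]
  zify [hle, hself] at hsum ⊢
  nlinarith

theorem IsOptimal.card_deficient_le (hf : IsOptimal pal f) (hpal : Function.Surjective pal)
    (hdeg : G.degree x ≤ Fintype.card α) (hsize : ∀ j, Fintype.card J ≤ classSize pal j)
    (hbalanced : ∀ j, Fintype.card α < Fintype.card J * (classSize pal j + 1)) :
    #(deficient G (pal ∘ f) x) ≤ slack pal f x * (Fintype.card J + 1) := by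
  refine Nat.le_of_mul_le_mul_right ?_ (classSize_pos (rfl : pal (f x) = _))
  calc #(deficient G (pal ∘ f) x) * classSize pal (pal (f x))
    _ ≤ slack pal f x * Fintype.card α := hf.card_deficient_mul_le hpal hdeg
    _ ≤ slack pal f x * (Fintype.card J * (classSize pal (pal (f x)) + 1)) :=
        Nat.mul_le_mul_left _ (hbalanced _).le
    _ ≤ slack pal f x * ((Fintype.card J + 1) * classSize pal (pal (f x))) :=
        Nat.mul_le_mul_left _ (by linarith [hsize (pal (f x))])
    _ = slack pal f x * (Fintype.card J + 1) * classSize pal (pal (f x)) := (mul_assoc _ _ _).symm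

end Optimal

theorem exists_div_le_classSize (α : Type*) [Fintype α] (m : ℕ) [NeZero m] :
    ∃ pal : α → Fin m, ∀ j, Fintype.card α / m ≤ classSize pal j := by
  refine ⟨fun a => Fin.ofNat m (Fintype.equivFin α a), fun j => ?_⟩
  have hcount := Nat.count_modEq_card (Fintype.card α) (NeZero.pos m) (j : ℕ)
  rw [Nat.count_eq_card_filter_range] at hcount
  calc Fintype.card α / m
    _ ≤ #{i ∈ range (Fintype.card α) | i ≡ j [MOD m]} := by rw [hcount]; exact Nat.le_add_right _ _
    _ ≤ classSize _ j := card_le_card_of_surjOn (fun a => (Fintype.equivFin α a : ℕ)) ?_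
  intro i hi
  obtain ⟨hi, hij⟩ := mem_filter.1 (mem_coe.1 hi)
  refine ⟨(Fintype.equivFin α).symm ⟨i, mem_range.1 hi⟩, ?_, by simp⟩
  simpa [Fin.ext_iff] using Eq.trans hij (Nat.mod_eq_of_lt j.2)

section Selection

variable {ι V : Type*} [Fintype ι] {T : ι → Finset V} {cap σ : V → ℕ} {n : ι → ℕ} {B c : ℕ}

theorem exists_choice_card_filter_le (hB : 0 < B) (hT : ∀ i, B ≤ #(T i))
    (hcap : ∀ x, #{i | x ∈ T i} ≤ B * cap x) :
    ∃ g : ι → V, (∀ i, g i ∈ T i) ∧ ∀ x, #{i | g i = x} ≤ cap x := by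
  set t : ι → Finset (Σ x, Fin (cap x)) := fun i => (T i).sigma fun _ => univ with ht
  have hall (s : Finset ι) : #s ≤ #(s.biUnion t) := by
    refine Nat.le_of_mul_le_mul_left ?_ hB
    have hbiUnion : s.biUnion t = (s.biUnion T).sigma fun _ => univ := by
      ext
      simp [ht]
    calc B * #s
      _ = ∑ _i ∈ s, B := by rw [sum_const, smul_eq_mul, mul_comm]
      _ ≤ ∑ i ∈ s, #(T i) := sum_le_sum fun i _ => hT i
      _ = ∑ x ∈ s.biUnion T, #{i ∈ s | x ∈ T i} := by
          refine .trans ?_ (sum_card_bipartiteAbove_eq_sum_card_bipartiteBelow fun i x => x ∈ T i)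
          refine sum_congr rfl fun i hi => congrArg card ?_
          rw [bipartiteAbove, filter_mem_eq_inter,
            inter_eq_right.2 (subset_biUnion_of_mem T hi)]
      _ ≤ ∑ x ∈ s.biUnion T, B * cap x := sum_le_sum fun x _ =>
          (card_le_card (filter_subset_filter _ (subset_univ s))).trans (hcap x)
      _ = B * #(s.biUnion t) := by simp [hbiUnion, mul_sum]
  obtain ⟨h, hinj, hmem⟩ := (all_card_le_biUnion_card_iff_exists_injective t).1 hall
  refine ⟨fun i => (h i).1, fun i => (mem_sigma.1 (hmem i)).1, fun x => ?_⟩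
  calc #{i | (h i).1 = x}
    _ ≤ #(({x} : Finset V).sigma fun x => (univ : Finset (Fin (cap x)))) :=
        card_le_card_of_injOn h (fun i hi => by simpa using hi) hinj.injOn
    _ = cap x := by simp

theorem exists_disjoint_subsets_card_eq {s : Finset V} {n : ℕ} (h : n * B ≤ #s) :
    ∃ P : Fin n → Finset V, (∀ a, P a ⊆ s) ∧ (∀ a, #(P a) = B) ∧
      Pairwise (Function.onFun Disjoint P) := by
  obtain ⟨e⟩ : Nonempty (Fin n × Fin B ↪ s) :=
    Function.Embedding.nonempty_of_card_le (by simpa using h)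
  have hinj : Function.Injective fun q => (e q : V) := Subtype.val_injective.comp e.injective
  refine ⟨fun a => univ.image fun b => e (a, b), fun a => image_subset_iff.2 fun b _ => (e _).2,
    fun a => ?_, fun a a' hne => disjoint_left.2 fun x hx hx' => hne ?_⟩
  · rw [card_image_of_injective _ fun b b' h => congrArg Prod.snd (hinj h), card_fin]
  · obtain ⟨b, -, rfl⟩ := mem_image.1 hx
    obtain ⟨b', -, hb'⟩ := mem_image.1 hx'
    exact congrArg Prod.fst (hinj hb'.symm)

theorem exists_subset_card_eq_of_card_filter_le (hB : 0 < B) (hT : ∀ i, n i * B ≤ #(T i))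
    (hcap : ∀ x, #{i | x ∈ T i} ≤ B * cap x) :
    ∃ S : ι → Finset V, (∀ i, S i ⊆ T i) ∧ (∀ i, #(S i) = n i) ∧
      ∀ x, #{i | x ∈ S i} ≤ cap x := by
  choose block hblock hcard hdisj using fun i => exists_disjoint_subsets_card_eq (hT i)
  have hload (x : V) : #{q : Σ i, Fin (n i) | x ∈ block q.1 q.2} ≤ B * cap x := by
    refine (card_le_card_of_injOn Sigma.fst (fun q hq => ?_) fun q hq q' hq' h => ?_).trans (hcap x)
    · exact mem_coe.2 (mem_filter.2 ⟨mem_univ _, hblock _ _ (mem_filter.1 hq).2⟩)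
    · obtain ⟨i, a⟩ := q
      obtain ⟨i', a'⟩ := q'
      obtain rfl : i = i' := h
      by_contra hne
      exact disjoint_left.1 (hdisj i fun h => hne (congrArg (Sigma.mk i) h))
        (mem_filter.1 hq).2 (mem_filter.1 hq').2
  obtain ⟨g, hg, hgcap⟩ := exists_choice_card_filter_le
    (T := fun q : Σ i, Fin (n i) => block q.1 q.2) hB (fun q => (hcard q.1 q.2).ge) hload
  have hginj (i : ι) : Function.Injective fun a => g ⟨i, a⟩ := fun a a' h => by
    by_contra hne
    exact disjoint_left.1 (hdisj i hne) (hg ⟨i, a⟩) (Eq.subst h.symm (hg ⟨i, a'⟩))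
  refine ⟨fun i => univ.image fun a => g ⟨i, a⟩, fun i => ?_, fun i => ?_, fun x => ?_⟩
  · exact image_subset_iff.2 fun a _ => hblock i a (hg ⟨i, a⟩)
  · rw [card_image_of_injective _ (hginj i), card_fin]
  · refine (card_le_card_of_surjOn Sigma.fst fun i hi => ?_).trans (hgcap x)
    obtain ⟨a, -, ha⟩ := mem_image.1 (mem_filter.1 hi).2
    exact ⟨⟨i, a⟩, mem_coe.2 (mem_filter.2 ⟨mem_univ _, ha⟩), rfl⟩

theorem exists_selection_mul_lt (hc : 2 ≤ c) (hT : ∀ i, n i * (2 * (c - 1) * (c + 2)) ≤ #(T i))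
    (hσ : ∀ i, ∀ x ∈ T i, c ≤ σ x) (hload : ∀ x, #{i | x ∈ T i} ≤ σ x * (c + 2)) :
    ∃ S : ι → Finset V, (∀ i, S i ⊆ T i) ∧ (∀ i, #(S i) = n i) ∧
      ∀ i, ∀ x ∈ S i, #{i' | x ∈ S i'} * (c - 1) < σ x := by
  obtain ⟨S, hST, hS, hcap⟩ := exists_subset_card_eq_of_card_filter_le
    (cap := fun x => (σ x - 1) / (c - 1)) (Nat.mul_pos (by omega) (by omega)) hT fun x => by
      rcases (Finset.filter (fun i => x ∈ T i) univ).eq_empty_or_nonempty with h | ⟨i, hi⟩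
      · rw [h, card_empty]
        exact Nat.zero_le _
      have hx := hσ i x (mem_filter.1 hi).2
      have hdiv : σ x - 1 < (c - 1) * ((σ x - 1) / (c - 1) + 1) :=
        Nat.lt_mul_div_succ _ (by omega)
      have hone : 1 ≤ (σ x - 1) / (c - 1) := (Nat.one_le_div_iff (by omega)).2 (by omega)
      calc #{i | x ∈ T i}
        _ ≤ σ x * (c + 2) := hload x
        _ ≤ 2 * (c - 1) * ((σ x - 1) / (c - 1)) * (c + 2) := by
            gcongr
            have := Nat.le_mul_of_pos_right (c - 1) hone
            rw [mul_add_one] at hdiv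
            rw [mul_assoc]
            omega
        _ = 2 * (c - 1) * (c + 2) * ((σ x - 1) / (c - 1)) := by ring
  refine ⟨S, hST, hS, fun i x hx => ?_⟩
  have hpos := hσ i x (hST i hx)
  calc #{i' | x ∈ S i'} * (c - 1)
    _ ≤ (σ x - 1) / (c - 1) * (c - 1) := Nat.mul_le_mul_right _ (hcap x)
    _ ≤ σ x - 1 := Nat.div_mul_le_self _ _
    _ < σ x := by omega

theorem exists_selection_disjoint (hc : 2 ≤ c) (hT : ∀ i, n i * ((c - 1) * (c + 2)) ≤ #(T i))
    (hσ : ∀ i, ∀ x ∈ T i, σ x < c) (hload : ∀ x, #{i | x ∈ T i} ≤ σ x * (c + 2)) :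
    ∃ P : ι → Finset V, (∀ i, P i ⊆ T i) ∧ (∀ i, #(P i) = n i) ∧
      Pairwise (Function.onFun Disjoint P) := by
  obtain ⟨P, hPT, hP, hcap⟩ := exists_subset_card_eq_of_card_filter_le
    (cap := fun _ => 1) (Nat.mul_pos (by omega) (by omega)) hT fun x => by
      rcases (Finset.filter (fun i => x ∈ T i) univ).eq_empty_or_nonempty with h | ⟨i, hi⟩
      · rw [h, card_empty]
        exact Nat.zero_le _
      rw [mul_one]
      exact (hload x).trans
        (Nat.mul_le_mul_right _ (Nat.le_pred_of_lt (hσ i x (mem_filter.1 hi).2)))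
  refine ⟨P, hPT, hP, fun i i' hne => disjoint_left.2 fun x hx hx' => hne ?_⟩
  exact card_le_one.1 (hcap x) i (mem_filter.2 ⟨mem_univ _, hx⟩) i' (mem_filter.2 ⟨mem_univ _, hx'⟩)

end Selection

section Cliques

variable {V α ι κ : Type*} {F G : SimpleGraph V} {S : ι → Finset V}
  {P : κ → Finset V} {n : κ → ℕ} {c : ℕ}

theorem exists_coloring_of_full [Fintype V] [Fintype α]
    (hdeg : ∀ v, G.degree v ≤ Fintype.card α) {f : V → α}
    (hf : IsProperOn G {v | Fintype.card α ≤ G.degree v} f) : Nonempty (G.Coloring α) := by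
  set X : Finset V := {v | Fintype.card α ≤ G.degree v} with hX
  have hcompl : Disjoint X Xᶜ := disjoint_compl_right
  obtain ⟨ψ, -, hψ⟩ := hf.exists_extension hcompl
    (fun v _ => (card_nbrsIn_le_degree _ v).trans (hdeg v)) fun Z hZ hne _ => by
      obtain ⟨z, hz⟩ := hne
      refine ⟨z, hz, ?_⟩
      calc #((nbrsIn G X z).image f) + #(nbrsIn G Xᶜ z)
        _ ≤ #(nbrsIn G X z) + #(nbrsIn G Xᶜ z) := Nat.add_le_add_right card_image_le _
        _ = #(nbrsIn G (X ∪ Xᶜ) z) := (card_nbrsIn_union hcompl z).symm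
        _ ≤ G.degree z := card_nbrsIn_le_degree _ z
        _ < Fintype.card α := by simpa [hX] using hZ hz
  rw [union_compl] at hψ
  exact ⟨.mk ψ fun {u v} huv => hψ u (mem_univ u) v (mem_univ v) huv⟩

/-- The graph `F` with all edges inside the sets `S i` added, whose colourings are the colourings
of `F` that are injective on every `S i`. -/
def addCliques (F : SimpleGraph V) (S : ι → Finset V) : SimpleGraph V :=
  F ⊔ .fromRel fun u v => ∃ i, u ∈ S i ∧ v ∈ S i

theorem addCliques_adj {u v : V} :
    (addCliques F S).Adj u v ↔ F.Adj u v ∨ u ≠ v ∧ ∃ i, u ∈ S i ∧ v ∈ S i := by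
  simp only [addCliques, SimpleGraph.sup_adj, SimpleGraph.fromRel_adj, and_comm (a := v ∈ S _),
    or_self]

theorem degree_addCliques_le [Fintype V] [Fintype ι] (hS : ∀ i, #(S i) ≤ c) (x : V) :
    (addCliques F S).degree x ≤ F.degree x + #{i | x ∈ S i} * (c - 1) := by
  have hsub : (addCliques F S).neighborFinset x ⊆
      F.neighborFinset x ∪ ({i | x ∈ S i} : Finset ι).biUnion fun i => (S i).erase x := by
    intro w hw
    rw [SimpleGraph.mem_neighborFinset, addCliques_adj] at hw
    obtain hw | ⟨hne, i, hx, hw⟩ := hw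
    · exact mem_union_left _ ((F.mem_neighborFinset x w).2 hw)
    · exact mem_union_right _ (mem_biUnion.2
        ⟨i, mem_filter.2 ⟨mem_univ i, hx⟩, mem_erase.2 ⟨hne.symm, hw⟩⟩)
  rw [← SimpleGraph.card_neighborFinset_eq_degree, ← SimpleGraph.card_neighborFinset_eq_degree]
  refine (card_le_card hsub).trans ((card_union_le _ _).trans (Nat.add_le_add_left ?_ _))
  refine card_biUnion_le_card_mul _ _ _ fun i hi => ?_
  rw [card_erase_of_mem (mem_filter.1 hi).2]
  exact Nat.sub_le_sub_right (hS i) 1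

theorem IsDemand.exists_coloring_injOn [Fintype V] [Fintype α] [Fintype ι] [Finite κ]
    (hP : IsDemand α F P n c) (hS : ∀ i, #(S i) ≤ c)
    (hdeg : ∀ i, ∀ x ∈ S i, F.degree x + #{i' | x ∈ S i'} * (c - 1) < Fintype.card α)
    (hPS : ∀ k i, Disjoint (P k) (S i)) (f : F.Coloring α) :
    ∃ g : F.Coloring α, (∀ i, Set.InjOn g (S i)) ∧ ∀ k, n k ≤ #((P k).image g) := by
  set H := addCliques F S with hH
  have hlt (i) (x) (hx : x ∈ S i) : H.degree x < Fintype.card α :=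
    (degree_addCliques_le hS x).trans_lt (hdeg i x hx)
  have hle {x : V} (hx : ∀ i, x ∉ S i) : H.degree x ≤ F.degree x := by
    simpa [hx] using degree_addCliques_le (F := F) hS x
  have hHdeg (v : V) : H.degree v ≤ Fintype.card α := by
    by_cases hv : ∃ i, v ∈ S i
    · obtain ⟨i, hi⟩ := hv
      exact (hlt i v hi).le
    · exact (hle (not_exists.1 hv)).trans (hP.degree_le v)
  have hfull : IsProperOn H {v | Fintype.card α ≤ H.degree v} f := fun u hu v _ huv => by
    rw [hH, addCliques_adj] at huv
    obtain huv | ⟨-, i, hui, -⟩ := huv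
    · exact f.valid huv
    · exact absurd (hlt i u hui) (mem_filter.1 hu).2.not_gt
  have hHP : IsDemand α H P n c :=
    { hP with
      degree_le := hHdeg
      degree_lt := fun k v hv =>
        (hle fun i => disjoint_left.1 (hPS k i) hv).trans_lt (hP.degree_lt k v hv) }
  obtain ⟨g, hg⟩ := hHP.exists_coloring (exists_coloring_of_full hHdeg hfull).some
  refine ⟨.mk g fun huv => g.valid (addCliques_adj.2 (.inl huv)), fun i x hx y hy hxy => ?_, hg⟩
  by_contra hne
  exact g.valid (addCliques_adj.2 (.inr ⟨hne, i, hx, hy⟩)) hxy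

end Cliques

section Recolouring

variable {V α J ι κ : Type*} {G : SimpleGraph V} {pal : α → J} {f g : G.Coloring α} {ρ : V → J}
  {j : J} {v : V}

/-- The edges of `G` inside class `j` of the partition `ρ` of the vertices. -/
def classGraph (G : SimpleGraph V) (ρ : V → J) (j : J) : SimpleGraph V where
  Adj u v := G.Adj u v ∧ ρ u = j ∧ ρ v = j
  symm.symm _ _ h := ⟨h.1.symm, h.2.2, h.2.1⟩
  loopless.irrefl _ h := G.irrefl h.1

theorem degree_classGraph [Fintype V] (hv : ρ v = j) :
    (classGraph G ρ j).degree v = #(nbrsOfClass G ρ j v) := by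
  rw [← SimpleGraph.card_neighborFinset_eq_degree]
  congr 1
  ext w
  rw [SimpleGraph.mem_neighborFinset, mem_nbrsOfClass]
  exact and_congr_right' (and_iff_right hv)

theorem degree_classGraph_eq_zero [Fintype V] (hv : ρ v ≠ j) : (classGraph G ρ j).degree v = 0 := by
  rw [← SimpleGraph.card_neighborFinset_eq_degree, card_eq_zero, eq_empty_iff_forall_notMem]
  intro w hw
  exact hv (((classGraph G ρ j).mem_neighborFinset v w).1 hw).2.1

theorem exists_classGraph_coloring [Fintype α] (f : G.Coloring α) (hj : 0 < classSize pal j) :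
    Nonempty ((classGraph G (pal ∘ f) j).Coloring {a // pal a = j}) := by
  obtain ⟨a, ha⟩ := card_pos.1 hj
  refine ⟨.mk (fun v => if h : pal (f v) = j then ⟨f v, h⟩ else ⟨a, (mem_filter.1 ha).2⟩) ?_⟩
  rintro u v ⟨huv, hu, hv⟩
  rw [Function.comp_apply] at hu hv
  rw [dif_pos hu, dif_pos hv]
  exact fun h => f.valid huv (congrArg Subtype.val h)

theorem exists_coloring_of_classGraph
    (h : ∀ j, (classGraph G (pal ∘ f) j).Coloring {a // pal a = j}) :
    ∃ g : G.Coloring α, ∀ v, g v = h (pal (f v)) v := by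
  refine ⟨.mk (fun v => h (pal (f v)) v) fun {u v} huv hne => ?_, fun _ => rfl⟩
  have hpal : pal (f u) = pal (f v) := by
    rw [← (h (pal (f u)) u).2, ← (h (pal (f v)) v).2, hne]
  rw [hpal] at hne
  exact (h (pal (f v))).valid ⟨huv, hpal, rfl⟩ (Subtype.ext hne)

variable [Fintype V] [Fintype α] {S : ι → Finset V} {P : κ → Finset V}
  {p : κ → J} {n : κ → ℕ} {c : ℕ}

theorem isDemand_classGraph (hc : 2 ≤ c) (hsize : 2 * c * (c + 2) ≤ classSize pal j)
    (hself : ∀ v, #(nbrsOfClass G (pal ∘ f) (pal (f v)) v) ≤ classSize pal (pal (f v)))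
    (hn : ∀ k, n k ≤ c) (hP : ∀ k, 2 * n k + 3 ≤ #(P k))
    (hdisj : Pairwise (Function.onFun Disjoint P)) (hpos : ∀ k, ∀ x ∈ P k, 0 < slack pal f x) :
    IsDemand {a // pal a = j} (classGraph G (pal ∘ f) j) P n c := by
  have hcard : Fintype.card {a // pal a = j} = classSize pal j := Fintype.card_subtype _
  have hjpos : 0 < classSize pal j := (by positivity : 0 < 2 * c * (c + 2)).trans_le hsize
  refine ⟨fun v => ?_, fun k v hv => ?_, hdisj, hn, hc, hP, hcard ▸ hsize⟩ <;>
    rw [hcard] <;> by_cases hvj : (pal ∘ f) v = j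
  · subst hvj
    exact (degree_classGraph rfl).trans_le (hself v)
  · exact (degree_classGraph_eq_zero hvj).trans_le (Nat.zero_le _)
  · subst hvj
    exact (degree_classGraph rfl).trans_lt (Nat.lt_of_sub_pos (hpos k v hv))
  · exact (degree_classGraph_eq_zero hvj).trans_lt hjpos

theorem exists_recolouring [Fintype ι] [Finite κ] (hc : 2 ≤ c)
    (hsize : ∀ j, 2 * c * (c + 2) ≤ classSize pal j)
    (hself : ∀ v, #(nbrsOfClass G (pal ∘ f) (pal (f v)) v) ≤ classSize pal (pal (f v)))
    (hn : ∀ k, n k ≤ c) (hP : ∀ k, 2 * n k + 3 ≤ #(P k))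
    (hdisj : Pairwise (Function.onFun Disjoint P)) (hpos : ∀ k, ∀ x ∈ P k, 0 < slack pal f x)
    (hp : ∀ k, ∀ x ∈ P k, pal (f x) = p k) (hS : ∀ i, #(S i) ≤ c)
    (hslack : ∀ i, ∀ x ∈ S i, #{i' | x ∈ S i'} * (c - 1) < slack pal f x)
    (hPS : ∀ k i, Disjoint (P k) (S i)) :
    ∃ g : G.Coloring α, pal ∘ g = pal ∘ f ∧ (∀ i, Set.InjOn g (S i)) ∧
      ∀ k, n k ≤ #((P k).image g) := by
  have hclass (j : J) : ∃ h : (classGraph G (pal ∘ f) j).Coloring {a // pal a = j},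
      (∀ i, Set.InjOn h ({x ∈ S i | pal (f x) = j} : Finset V)) ∧
        ∀ k, n k ≤ #((P k).image h) := by
    have hjpos : 0 < classSize pal j :=
      (by positivity : 0 < 2 * c * (c + 2)).trans_le (hsize j)
    have hdeg (i) (x) (hx : x ∈ ({x ∈ S i | pal (f x) = j} : Finset V)) :
        (classGraph G (pal ∘ f) j).degree x +
          #{i' | x ∈ ({x ∈ S i' | pal (f x) = j} : Finset V)} * (c - 1) <
            Fintype.card {a // pal a = j} := by
      obtain ⟨hxi, rfl⟩ := mem_filter.1 hx
      rw [degree_classGraph (Function.comp_apply (f := pal)), Fintype.card_subtype]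
      simp only [mem_filter, and_true]
      exact Nat.add_lt_of_lt_sub' (hslack i x hxi)
    obtain ⟨h, hinj, hcard⟩ :=
      (isDemand_classGraph hc (hsize j) hself hn hP hdisj hpos).exists_coloring_injOn
        (fun i => (card_filter_le _ _).trans (hS i)) hdeg
        (fun k i => (hPS k i).mono_right (filter_subset _ _))
        (exists_classGraph_coloring f hjpos).some
    exact ⟨h, hinj, fun k => by convert hcard k⟩
  choose h hinj hcard using hclass
  obtain ⟨g, hg⟩ := exists_coloring_of_classGraph h
  have hgpal (v : V) : pal (g v) = pal (f v) := by
    rw [hg]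
    exact (h (pal (f v)) v).2
  refine ⟨g, funext hgpal, fun i x hx y hy hxy => ?_, fun k => ?_⟩
  · have hpal : pal (f x) = pal (f y) := by rw [← hgpal, hxy, hgpal]
    rw [hg, hg, hpal] at hxy
    exact hinj (pal (f y)) i (mem_filter.2 ⟨hx, hpal⟩) (mem_filter.2 ⟨hy, rfl⟩) (Subtype.ext hxy)
  · refine (hcard (p k) k).trans_eq ?_
    rw [← card_image_of_injective _ Subtype.val_injective, image_image]
    exact congrArg card (image_congr fun x hx => by rw [hg, hp k x hx, Function.comp_apply])

end Recolouring

section Threshold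

variable {c t m h : ℕ}

/-- The degree from which a vertex is required to see `c` colours. -/
def threshold (c : ℕ) : ℕ :=
  (c ^ 3 + 8 * c ^ 2 + 19 * c + 6) * (c + 1)

theorem mul_le_of_threshold_le_high (htm : t + m = c + 1) (hth : threshold c ≤ t * (2 * h)) :
    m * (2 * (c - 1) * (c + 2)) ≤ h := by
  rcases c with _ | b
  · simp
  rw [Nat.add_sub_cancel]
  by_contra! hlt
  refine hth.not_gt ?_
  calc t * (2 * h)
    _ ≤ t * (2 * (m * (2 * b * (b + 1 + 2)))) := by gcongr
    _ = 4 * t * m * (b * (b + 3)) := by ring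
    _ ≤ (t + m) ^ 2 * (b * (b + 3)) := Nat.mul_le_mul_right _ (four_mul_le_sq_add t m)
    _ = (b + 2) ^ 2 * (b * (b + 3)) := by rw [htm]
    _ < threshold (b + 1) := by
        rw [threshold]
        ring_nf
        nlinarith

theorem mul_le_of_threshold_le_low (htm : t + m = c + 1) (hth : threshold c ≤ t * (2 * h)) :
    (2 * m + 3) * ((c - 1) * (c + 2)) ≤ h := by
  rcases c with _ | b
  · simp
  rw [Nat.add_sub_cancel]
  by_contra! hlt
  refine (Nat.mul_le_mul_left 4 hth).not_gt ?_
  calc 4 * (t * (2 * h))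
    _ ≤ 4 * (t * (2 * ((2 * m + 3) * (b * (b + 1 + 2))))) := by gcongr
    _ = 4 * (2 * t) * (2 * m + 3) * (b * (b + 3)) := by ring
    _ ≤ (2 * t + (2 * m + 3)) ^ 2 * (b * (b + 3)) :=
        Nat.mul_le_mul_right _ (four_mul_le_sq_add _ _)
    _ = (2 * (t + m) + 3) ^ 2 * (b * (b + 3)) := by ring
    _ = (2 * (b + 2) + 3) ^ 2 * (b * (b + 3)) := by rw [htm]
    _ < 4 * threshold (b + 1) := by
        rw [threshold]
        ring_nf
        nlinarith

end Threshold

section Nondegenerate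

variable {V α J ι κ : Type*} [Fintype V] {G : SimpleGraph V} {pal : α → J} {f : G.Coloring α}
  {ρ : V → J} {T : Finset V} {s : ι → J} {p : κ → J} {j : J} {v : V} {c : ℕ}

theorem card_seen_comp_le (g : V → α) : #(seen G (pal ∘ g) v) ≤ #(seen G g v) := by
  rw [seen, ← image_image]
  exact card_image_le

theorem card_image_add_card_seen_comp_le {g : V → α} (hT : T ⊆ nbrsOfClass G (pal ∘ g) j v) :
    #(T.image g) + #(seen G (pal ∘ g) v) ≤ #(seen G g v) + 1 := by
  have hTseen : T.image g ⊆ seen G g v := image_subset_image (hT.trans (filter_subset _ _))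
  have hrest : seen G (pal ∘ g) v ⊆ insert j ((seen G g v \ T.image g).image pal) := by
    rw [seen, ← image_image]
    refine image_subset_iff.2 fun a ha => ?_
    by_cases haT : a ∈ T.image g
    · obtain ⟨x, hx, rfl⟩ := mem_image.1 haT
      exact mem_insert.2 (.inl (mem_nbrsOfClass.1 (hT hx)).2)
    · exact mem_insert_of_mem (mem_image_of_mem _ (mem_sdiff.2 ⟨ha, haT⟩))
  calc #(T.image g) + #(seen G (pal ∘ g) v)
    _ ≤ #(T.image g) + (#(seen G g v \ T.image g) + 1) := by
        gcongr
        exact (card_le_card hrest).trans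
          ((card_insert_le _ _).trans (Nat.add_le_add_right card_image_le 1))
    _ = #(seen G g v) + 1 := by
        rw [← add_assoc, add_comm #(T.image g), card_sdiff_add_card_eq_card hTseen]

theorem card_filter_mem_le_card_deficient [Fintype J] [Fintype ι] {a : ι → V} {T : ι → Finset V}
    (ha : Function.Injective a) (hseen : ∀ i, #(seen G ρ (a i)) + 1 < Fintype.card J)
    (hT : ∀ i, T i ⊆ nbrsOfClass G ρ (s i) (a i)) (x : V) :
    #{i | x ∈ T i} ≤ #(deficient G ρ x) := by
  refine card_le_card_of_injOn a (fun i hi => ?_) ha.injOn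
  have hx := (mem_nbrsOfClass.1 (hT i (mem_filter.1 hi).2)).1
  exact mem_filter.2 ⟨(G.mem_neighborFinset _ _).2 hx.symm, hseen i⟩

/-- A vertex of large degree that sees fewer than `c` of the classes. -/
structure IsNeedy (G : SimpleGraph V) (ρ : V → J) (c : ℕ) (v : V) : Prop where
  threshold_le : threshold c ≤ G.degree v
  card_seen_lt : #(seen G ρ v) < c

/-- The number of colours from a single class seen by `v` that guarantee, together with one colour
from each of the other classes seen by `v`, that `v` sees `c` colours. -/
def shortage (G : SimpleGraph V) (ρ : V → J) (c : ℕ) (v : V) : ℕ :=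
  c + 1 - #(seen G ρ v)

theorem IsNeedy.card_seen_add_shortage (hv : IsNeedy G ρ c v) :
    #(seen G ρ v) + shortage G ρ c v = c + 1 :=
  Nat.add_sub_of_le (hv.card_seen_lt.le.trans (Nat.le_succ c))

theorem IsNeedy.shortage_le (hv : IsNeedy G ρ c v) : shortage G ρ c v ≤ c := by
  have hdeg : 0 < G.degree v := hv.threshold_le.trans_lt' (by unfold threshold; positivity)
  obtain ⟨w, hw⟩ := (G.degree_pos_iff_exists_adj v).1 hdeg
  have hseen : 0 < #(seen G ρ v) := card_pos.2 ⟨ρ w, mem_seen.2 ⟨w, hw, rfl⟩⟩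
  rw [shortage]
  omega

theorem le_card_seen_of_shortage_le {g : V → α} (hT : T ⊆ nbrsOfClass G (pal ∘ g) j v)
    (h : shortage G (pal ∘ g) c v ≤ #(T.image g)) : c ≤ #(seen G g v) := by
  have := card_image_add_card_seen_comp_le hT
  rw [shortage] at h
  omega

variable [Fintype α]

/-- The neighbours of `v` of class `j` with slack at least `c`. -/
def highNbrs (pal : α → J) (f : G.Coloring α) (c : ℕ) (j : J) (v : V) : Finset V :=
  {x ∈ nbrsOfClass G (pal ∘ f) j v | c ≤ slack pal f x}

/-- The neighbours of `v` of class `j` with slack less than `c`. -/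
def lowNbrs (pal : α → J) (f : G.Coloring α) (c : ℕ) (j : J) (v : V) : Finset V :=
  {x ∈ nbrsOfClass G (pal ∘ f) j v | slack pal f x < c}

theorem IsNeedy.exists_many_nbrs (hv : IsNeedy G (pal ∘ f) c v) :
    ∃ j, shortage G (pal ∘ f) c v * (2 * (c - 1) * (c + 2)) ≤ #(highNbrs pal f c j v) ∨
      (2 * shortage G (pal ∘ f) c v + 3) * ((c - 1) * (c + 2)) ≤ #(lowNbrs pal f c j v) := by
  have : Nonempty J := ⟨pal (f v)⟩
  obtain ⟨j, hj⟩ := exists_degree_le_card_seen_mul G (pal ∘ f) v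
  have hsplit : #(highNbrs pal f c j v) + #(lowNbrs pal f c j v) =
      #(nbrsOfClass G (pal ∘ f) j v) := by
    simpa only [highNbrs, lowNbrs, not_le] using
      card_filter_add_card_filter_not (s := nbrsOfClass G (pal ∘ f) j v) (c ≤ slack pal f ·)
  refine ⟨j, ?_⟩
  rcases le_total #(lowNbrs pal f c j v) #(highNbrs pal f c j v) with h | h
  · refine .inl (mul_le_of_threshold_le_high hv.card_seen_add_shortage
      ((hv.threshold_le.trans hj).trans (Nat.mul_le_mul_left _ ?_)))
    omega
  · refine .inr (mul_le_of_threshold_le_low hv.card_seen_add_shortage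
      ((hv.threshold_le.trans hj).trans (Nat.mul_le_mul_left _ ?_)))
    omega

theorem exists_recolouring_le_card_seen [Fintype J] {a : ι → V} {b : κ → V} (hc : 2 ≤ c)
    (hJ : Fintype.card J = c + 1) (hsize : ∀ j, 2 * c * (c + 2) ≤ classSize pal j)
    (hself : ∀ v, #(nbrsOfClass G (pal ∘ f) (pal (f v)) v) ≤ classSize pal (pal (f v)))
    (hfew : ∀ x, #(deficient G (pal ∘ f) x) ≤ slack pal f x * (c + 2))
    (ha : Function.Injective a) (haN : ∀ i, IsNeedy G (pal ∘ f) c (a i))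
    (hs : ∀ i, shortage G (pal ∘ f) c (a i) * (2 * (c - 1) * (c + 2)) ≤
      #(highNbrs pal f c (s i) (a i)))
    (hb : Function.Injective b) (hbN : ∀ k, IsNeedy G (pal ∘ f) c (b k))
    (hp : ∀ k, (2 * shortage G (pal ∘ f) c (b k) + 3) * ((c - 1) * (c + 2)) ≤
      #(lowNbrs pal f c (p k) (b k))) :
    ∃ g : G.Coloring α, pal ∘ g = pal ∘ f ∧ (∀ i, c ≤ #(seen G g (a i))) ∧
      ∀ k, c ≤ #(seen G g (b k)) := by
  have := Fintype.ofInjective a ha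
  have := Fintype.ofInjective b hb
  have hseen {v : V} (hv : IsNeedy G (pal ∘ f) c v) :
      #(seen G (pal ∘ f) v) + 1 < Fintype.card J := hJ ▸ Nat.succ_lt_succ hv.card_seen_lt
  obtain ⟨S, hST, hS, hSslack⟩ := exists_selection_mul_lt hc hs
    (fun i x hx => (mem_filter.1 hx).2) fun x => (card_filter_mem_le_card_deficient ha
      (fun i => hseen (haN i)) (fun i => filter_subset _ _) x).trans (hfew x)
  have hbload (x : V) : #{k | x ∈ lowNbrs pal f c (p k) (b k)} ≤ slack pal f x * (c + 2) :=
    (card_filter_mem_le_card_deficient hb (fun k => hseen (hbN k))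
      (fun k => filter_subset _ _) x).trans (hfew x)
  obtain ⟨P, hPT, hP, hPdisj⟩ := exists_selection_disjoint hc hp
    (fun k x hx => (mem_filter.1 hx).2) hbload
  have hpos (k) (x) (hx : x ∈ P k) : 0 < slack pal f x := by
    refine Nat.pos_of_mul_pos_right ((card_pos.2 ⟨k, ?_⟩).trans_le (hbload x))
    exact mem_filter.2 ⟨mem_univ k, hPT k hx⟩
  obtain ⟨g, hg, hgS, hgP⟩ := exists_recolouring hc hsize hself (fun k => (hbN k).shortage_le)
    (fun k => (hP k).ge) hPdisj hpos
    (fun k x hx => (mem_nbrsOfClass.1 (mem_filter.1 (hPT k hx)).1).2)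
    (fun i => (hS i).trans_le (haN i).shortage_le) hSslack
    (fun k i => disjoint_left.2 fun x hx hx' =>
      (mem_filter.1 (hPT k hx)).2.not_ge (mem_filter.1 (hST i hx')).2)
  refine ⟨g, hg, fun i => ?_, fun k => ?_⟩
  · refine le_card_seen_of_shortage_le (pal := pal) (T := S i) (j := s i) ?_ ?_ <;> rw [hg]
    · exact (hST i).trans (filter_subset _ _)
    · rw [card_image_of_injOn (hgS i), hS]
  · refine le_card_seen_of_shortage_le (pal := pal) (T := P k) (j := p k) ?_ ?_ <;> rw [hg]
    · exact (hPT k).trans (filter_subset _ _)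
    · exact hgP k

theorem IsOptimal.exists_nondegenerate [Fintype J] (hf : IsOptimal pal f)
    (hdeg : ∀ v, G.degree v ≤ Fintype.card α) (hc : 2 ≤ c) (hJ : Fintype.card J = c + 1)
    (hsize : ∀ j, 2 * c * (c + 2) ≤ classSize pal j)
    (hbalanced : ∀ j, Fintype.card α < Fintype.card J * (classSize pal j + 1)) :
    ∃ g : G.Coloring α, ∀ v, threshold c ≤ G.degree v → c ≤ #(seen G g v) := by
  have hpal : Function.Surjective pal := fun j => by
    obtain ⟨a, ha⟩ := card_pos.1 ((by positivity : 0 < 2 * c * (c + 2)).trans_le (hsize j))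
    exact ⟨a, (mem_filter.1 ha).2⟩
  have hcard (j : J) : Fintype.card J ≤ classSize pal j :=
    hJ.trans_le ((by nlinarith : c + 1 ≤ 2 * c * (c + 2)).trans (hsize j))
  have hfew (x : V) : #(deficient G (pal ∘ f) x) ≤ slack pal f x * (c + 2) := by
    simpa only [hJ] using hf.card_deficient_le hpal (hdeg x) hcard hbalanced
  let High (v : V) : Prop := IsNeedy G (pal ∘ f) c v ∧ ∃ j,
    shortage G (pal ∘ f) c v * (2 * (c - 1) * (c + 2)) ≤ #(highNbrs pal f c j v)
  let Low (v : V) : Prop := IsNeedy G (pal ∘ f) c v ∧ ∃ j,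
    (2 * shortage G (pal ∘ f) c v + 3) * ((c - 1) * (c + 2)) ≤ #(lowNbrs pal f c j v)
  choose s hs using fun i : {v // High v} => i.2.2
  choose p hp using fun k : {v // Low v} => k.2.2
  obtain ⟨g, hg, hgHigh, hgLow⟩ := exists_recolouring_le_card_seen hc hJ hsize
    (fun v => hf.card_nbrsOfClass_self_le (hdeg v)) hfew
    Subtype.val_injective (fun i => i.2.1) hs Subtype.val_injective (fun k => k.2.1) hp
  refine ⟨g, fun v hv => ?_⟩
  by_cases hseen : c ≤ #(seen G (pal ∘ f) v)
  · exact hseen.trans (hg ▸ card_seen_comp_le g)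
  have hneedy : IsNeedy G (pal ∘ f) c v := ⟨hv, not_le.1 hseen⟩
  obtain ⟨j, hj | hj⟩ := hneedy.exists_many_nbrs
  · exact hgHigh ⟨v, hneedy, j, hj⟩
  · exact hgLow ⟨v, hneedy, j, hj⟩

theorem exists_coloring_nondegenerate_of_threshold_le (f : G.Coloring α)
    (hdeg : ∀ v, G.degree v ≤ Fintype.card α) (hc : 2 ≤ c)
    (hcα : threshold c ≤ Fintype.card α) :
    ∃ g : G.Coloring α, ∀ v, threshold c ≤ G.degree v → c ≤ #(seen G g v) := by
  obtain ⟨pal, hpal⟩ := exists_div_le_classSize α (c + 1)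
  obtain ⟨g, hg⟩ := exists_isOptimal pal f
  refine hg.exists_nondegenerate hdeg hc (Fintype.card_fin _) (fun j => ?_) fun j => ?_
  · refine le_trans ?_ (((Nat.le_div_iff_mul_le c.succ_pos).2 hcα).trans (hpal j))
    nlinarith
  · rw [Fintype.card_fin]
    exact (Nat.lt_mul_div_succ _ c.succ_pos).trans_le
      (Nat.mul_le_mul_left _ (Nat.succ_le_succ (hpal j)))

theorem nonempty_coloring_of_cliqueFree (hα : 3 ≤ Fintype.card α)
    (hfree : G.CliqueFree (Fintype.card α + 1)) (hdeg : ∀ v, G.degree v ≤ Fintype.card α) :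
    Nonempty (G.Coloring α) := by
  obtain ⟨f, hf⟩ := exists_isProperOn_of_cliqueFree (S := univ) hα hfree fun v _ =>
    (card_nbrsIn_le_degree univ v).trans (hdeg v)
  exact ⟨.mk f fun {u v} huv => hf u (mem_univ u) v (mem_univ v) huv⟩

theorem exists_coloring_nondegenerate (hα : 3 ≤ Fintype.card α)
    (hfree : G.CliqueFree (Fintype.card α + 1)) (hdeg : ∀ v, G.degree v ≤ Fintype.card α)
    (hc : 2 ≤ c) : ∃ g : G.Coloring α, ∀ v, threshold c ≤ G.degree v → c ≤ #(seen G g v) := by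
  obtain ⟨f⟩ := nonempty_coloring_of_cliqueFree hα hfree hdeg
  by_cases hcα : threshold c ≤ Fintype.card α
  · exact exists_coloring_nondegenerate_of_threshold_le f hdeg hc hcα
  · exact ⟨f, fun v hv => absurd (hv.trans (hdeg v)) hcα⟩

end Nondegenerate

end

end NondegenerateColoring

/-- Let `D ≥ 3` and let `G` be a finite simple graph with maximum degree at
most `D` containing no clique on `D+1` vertices. Then for every integer `c ≥ 2`, `G` admits a
proper vertex coloring with `D` colors such that every vertex of degree at least
`p = (c³ + 8c² + 19c + 6)(c+1)` has at least `c` distinct colors among its neighbors. -/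
theorem brooks_nondegenerate {V : Type*} [Fintype V] [DecidableEq V]
    (G : SimpleGraph V) [DecidableRel G.Adj] (D : ℕ) (hD : 3 ≤ D)
    (hdeg : ∀ v : V, G.degree v ≤ D) (hfree : G.CliqueFree (D + 1))
    (c : ℕ) (hc : 2 ≤ c) :
    ∃ f : V → Fin D,
      (∀ u v : V, G.Adj u v → f u ≠ f v) ∧
      (∀ v : V, (c ^ 3 + 8 * c ^ 2 + 19 * c + 6) * (c + 1) ≤ G.degree v →
        c ≤ ((G.neighborFinset v).image f).card) := by
  classical
  obtain ⟨g, hg⟩ := NondegenerateColoring.exists_coloring_nondegenerate (G := G) (α := Fin D)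
    (by rwa [Fintype.card_fin]) (by rwa [Fintype.card_fin])
    (fun v => by rw [Fintype.card_fin]; convert hdeg v) hc
  refine ⟨g, fun u v huv => g.valid huv, fun v hv => ?_⟩
  convert hg v (by unfold NondegenerateColoring.threshold; convert hv) using 2
  unfold NondegenerateColoring.seen
  congr!
end

section
/- Let G be a finite simple graph with maximum degree at most D that contains no clique on D+1 vertices, and let D = α_1 + α_2 + ... + α_{c+1} where each α_i ≥ 2 is an integer. Then among all colorings of V(G) with the colors {1,…,c+1} there exists a coloring ξ such that (1) ξ minimizes Φ over all colorings of V(G) with colors {1,…,c+1}, and (2) for every i ∈ {1,…,c+1} there is no clique on α_i + 1 vertices all of which have color i in ξ. -/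
open scoped Classical

/-- The number of edges of `G` both of whose endpoints have color `i` under `ξ`. -/
noncomputable def monoEdges {V : Type*} [Fintype V] [DecidableEq V] (G : SimpleGraph V)
    [DecidableRel G.Adj] {k : ℕ} (ξ : V → Fin k) (i : Fin k) : ℕ :=
  (G.edgeFinset.filter fun e => ∀ v ∈ e, ξ v = i).card

/-- `Φ(ξ) = Σ_i f_i(ξ)/α_i` as a rational number. -/
noncomputable def Phi {V : Type*} [Fintype V] [DecidableEq V] (G : SimpleGraph V)
    [DecidableRel G.Adj] {k : ℕ} (α : Fin k → ℕ) (ξ : V → Fin k) : ℚ :=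
  ∑ i, (monoEdges G ξ i : ℚ) / (α i : ℚ)

/-!
Call a clique on `α i + 1` vertices of color `i` full. Among the minimizers of `Φ`, take one with
the fewest full cliques. A vertex `x` of a full clique of color `a` has at least `α a` neighbors
of color `a`, hence at least `α i` neighbors of each color `i`, as otherwise recoloring `x` with
`i` would decrease `Φ`; the degree bound makes these equalities. So `x` can be recolored with any
color `b` without changing `Φ`, and by the choice of the coloring this puts `x` into a full
clique of color `b`. It follows that the neighbors of color `b` of `x` are, apart from `x`, a
complete connected component of their color class.

Let `A` be a full clique of color `a`, and let `b ≠ a`. If a vertex `y` of color `b` is adjacent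
to two vertices `u` and `v` of `A`, then it is adjacent to all of `A`: recolor `u` with `b`,
which puts `y` into a full clique, and apply the above to `y` and its neighbor `v`.

Suppose that no vertex of color `b` has two neighbors in `A`. Recolor a vertex of `A` with `b`,
then another vertex of the resulting full clique with `a`, and so on. The process never returns
to what is left of a full clique met before, since the vertex leading back to it would have had
two neighbors in that clique. So it visits new vertices forever, which is impossible.

Hence some vertex of color `b` is adjacent to all of `A`, all vertices of `A` have the same
neighbors of color `b`, and a vertex of `A` together with its neighbors forms a clique on
`∑ i, α i + 1` vertices.
-/

open scoped Finset
open Function (update update_self update_of_ne)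

section ColorNeighbors

variable {V κ : Type*} [Fintype V] {G : SimpleGraph V} [DecidableRel G.Adj] [DecidableEq κ]

/-- The set `N_i(v)` of the neighbors of `v` which have color `i` under `ξ`. -/
def colorNeighborFinset (G : SimpleGraph V) [DecidableRel G.Adj] (ξ : V → κ) (i : κ) (v : V) :
    Finset V :=
  {u ∈ G.neighborFinset v | ξ u = i}

@[simp]
theorem mem_colorNeighborFinset {ξ : V → κ} {i : κ} {u v : V} :
    u ∈ colorNeighborFinset G ξ i v ↔ G.Adj v u ∧ ξ u = i := by
  simp [colorNeighborFinset]

theorem sum_card_colorNeighborFinset [Fintype κ] (ξ : V → κ) (v : V) :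
    ∑ i, #(colorNeighborFinset G ξ i v) = G.degree v :=
  (Finset.card_eq_sum_card_fiberwise fun _ _ => Finset.mem_coe.2 (Finset.mem_univ _)).symm

theorem colorNeighborFinset_update_self [DecidableEq V] (ξ : V → κ) (x : V) (b i : κ) :
    colorNeighborFinset G (update ξ x b) i x = colorNeighborFinset G ξ i x := by
  ext u
  simp only [mem_colorNeighborFinset]
  exact and_congr_right fun hxu => by rw [update_of_ne hxu.ne']

end ColorNeighbors

section Recoloring

variable {V : Type*} [Fintype V] [DecidableEq V] {G : SimpleGraph V} [DecidableRel G.Adj] {k : ℕ}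

theorem card_filter_mem_edgeFinset_color (ξ : V → Fin k) (i : Fin k) (x : V) :
    #{e ∈ G.edgeFinset | (∀ v ∈ e, ξ v = i) ∧ x ∈ e} =
      if ξ x = i then #(colorNeighborFinset G ξ i x) else 0 := by
  split_ifs with hx
  · rw [← Finset.card_image_of_injective (colorNeighborFinset G ξ i x)
      (fun u v => Sym2.congr_right.1 : Function.Injective fun u => s(x, u))]
    congr 1
    ext e
    simp only [Finset.mem_filter, SimpleGraph.mem_edgeFinset, Finset.mem_image,
      mem_colorNeighborFinset]
    constructor
    · rintro ⟨he, hcolor, u, rfl⟩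
      exact ⟨u, ⟨he, hcolor u (Sym2.mem_mk_right ..)⟩, rfl⟩
    · rintro ⟨u, ⟨hxu, hu⟩, rfl⟩
      exact ⟨hxu, by simp [hx, hu], Sym2.mem_mk_left ..⟩
  · rw [Finset.card_eq_zero, Finset.filter_eq_empty_iff]
    exact fun e _ he => hx (he.1 x he.2)

theorem monoEdges_eq_add (ξ : V → Fin k) (i : Fin k) (x : V) :
    monoEdges G ξ i = monoEdges (G.deleteIncidenceSet x) ξ i +
      if ξ x = i then #(colorNeighborFinset G ξ i x) else 0 := by
  rw [← card_filter_mem_edgeFinset_color, monoEdges, monoEdges,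
    SimpleGraph.edgeFinset_deleteIncidenceSet_eq_filter, Finset.filter_comm, add_comm,
    ← Finset.filter_filter, Finset.card_filter_add_card_filter_not]

theorem monoEdges_deleteIncidenceSet_update (ξ : V → Fin k) (x : V) (b i : Fin k) :
    monoEdges (G.deleteIncidenceSet x) (update ξ x b) i =
      monoEdges (G.deleteIncidenceSet x) ξ i := by
  simp only [monoEdges, SimpleGraph.edgeFinset_deleteIncidenceSet_eq_filter]
  congr 1
  refine Finset.filter_congr fun e he => forall₂_congr fun v hv => ?_
  rw [update_of_ne (ne_of_mem_of_not_mem hv (Finset.mem_filter.1 he).2)]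

theorem phi_eq_add (α : Fin k → ℕ) (ξ : V → Fin k) (x : V) :
    Phi G α ξ = Phi (G.deleteIncidenceSet x) α ξ +
      (#(colorNeighborFinset G ξ (ξ x) x) : ℚ) / α (ξ x) := by
  have hsplit (i : Fin k) : (monoEdges G ξ i : ℚ) / α i =
      (monoEdges (G.deleteIncidenceSet x) ξ i : ℚ) / α i +
        if ξ x = i then (#(colorNeighborFinset G ξ i x) : ℚ) / α i else 0 := by
    rw [monoEdges_eq_add ξ i x]
    split_ifs <;> simp [add_div]
  simp [Phi, hsplit, Finset.sum_add_distrib]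

theorem phi_update (α : Fin k → ℕ) (ξ : V → Fin k) (x : V) (b : Fin k) :
    Phi G α (update ξ x b) = Phi G α ξ - (#(colorNeighborFinset G ξ (ξ x) x) : ℚ) / α (ξ x) +
      (#(colorNeighborFinset G ξ b x) : ℚ) / α b := by
  have hdelete : Phi (G.deleteIncidenceSet x) α (update ξ x b) =
      Phi (G.deleteIncidenceSet x) α ξ := by
    simp only [Phi, monoEdges_deleteIncidenceSet_update]
  rw [phi_eq_add α (update ξ x b) x, phi_eq_add α ξ x, hdelete, update_self,
    colorNeighborFinset_update_self, add_sub_cancel_right]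

end Recoloring

section FullCliques

variable {V κ : Type*} {G : SimpleGraph V} {α : κ → ℕ} {ξ : V → κ} {i : κ} {s : Finset V} {x : V}

/-- `s` is a clique on `α i + 1` vertices, all of color `i`: the configuration that the theorem
excludes. -/
structure IsFullClique (G : SimpleGraph V) (α : κ → ℕ) (ξ : V → κ) (i : κ) (s : Finset V) :
    Prop where
  isNClique : G.IsNClique (α i + 1) s
  color_eq : ∀ v ∈ s, ξ v = i

namespace IsFullClique

theorem adj (hs : IsFullClique G α ξ i s) {u v : V} (hu : u ∈ s) (hv : v ∈ s) (huv : u ≠ v) :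
    G.Adj u v :=
  hs.isNClique.isClique hu hv huv

theorem exists_mem_ne (hs : IsFullClique G α ξ i s) (hi : 0 < α i) (x : V) : ∃ y ∈ s, y ≠ x :=
  Finset.exists_mem_ne (by rw [hs.isNClique.card_eq]; omega) x

theorem card_erase [DecidableEq V] (hs : IsFullClique G α ξ i s) (hx : x ∈ s) :
    #(s.erase x) = α i := by
  rw [Finset.card_erase_of_mem hx, hs.isNClique.card_eq, Nat.add_sub_cancel]

theorem erase_subset_colorNeighborFinset [Fintype V] [DecidableEq V] [DecidableRel G.Adj]
    [DecidableEq κ] (hs : IsFullClique G α ξ i s) (hx : x ∈ s) :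
    s.erase x ⊆ colorNeighborFinset G ξ i x := by
  intro u hu
  obtain ⟨hux, hus⟩ := Finset.mem_erase.1 hu
  exact mem_colorNeighborFinset.2 ⟨hs.adj hx hus hux.symm, hs.color_eq u hus⟩

end IsFullClique

theorem isFullClique_update_iff [DecidableEq V] (hx : x ∉ s) (b : κ) :
    IsFullClique G α (update ξ x b) i s ↔ IsFullClique G α ξ i s := by
  have hcolor : (∀ v ∈ s, update ξ x b v = i) ↔ ∀ v ∈ s, ξ v = i :=
    forall₂_congr fun v hv => by rw [update_of_ne (ne_of_mem_of_not_mem hv hx)]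
  exact ⟨fun h => ⟨h.1, hcolor.1 h.2⟩, fun h => ⟨h.1, hcolor.2 h.2⟩⟩

variable [Fintype V]

/-- The full cliques of all colors. Their number is the secondary objective, after `Phi`. -/
noncomputable def fullCliques (G : SimpleGraph V) (α : κ → ℕ) (ξ : V → κ) : Finset (Finset V) :=
  {s | ∃ i, IsFullClique G α ξ i s}

@[simp]
theorem mem_fullCliques : s ∈ fullCliques G α ξ ↔ ∃ i, IsFullClique G α ξ i s := by
  simp [fullCliques]

theorem filter_notMem_fullCliques_update [DecidableEq V] (b : κ) :
    {s ∈ fullCliques G α (update ξ x b) | x ∉ s} = {s ∈ fullCliques G α ξ | x ∉ s} := by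
  ext s
  simp only [Finset.mem_filter, mem_fullCliques]
  exact and_congr_left fun hx => exists_congr fun i => isFullClique_update_iff hx b

end FullCliques

section Minimizers

variable {V : Type*} [Fintype V] [DecidableEq V] {G : SimpleGraph V} [DecidableRel G.Adj] {k : ℕ}
  {α : Fin k → ℕ} {ξ : V → Fin k} {a : Fin k} {A : Finset V} {x : V}

theorem card_colorNeighborFinset_div_le (hmin : ∀ ψ, Phi G α ξ ≤ Phi G α ψ) (b : Fin k) (v : V) :
    (#(colorNeighborFinset G ξ (ξ v) v) : ℚ) / α (ξ v) ≤
      (#(colorNeighborFinset G ξ b v) : ℚ) / α b := by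
  have := phi_update (G := G) α ξ v b
  linarith [hmin (update ξ v b)]

variable (hα : ∀ i, 0 < α i) (hdeg : ∀ v, G.degree v ≤ ∑ i, α i)

include hα hdeg

theorem card_colorNeighborFinset_eq_of_le (hmin : ∀ ψ, Phi G α ξ ≤ Phi G α ψ) {v : V}
    (hv : α (ξ v) ≤ #(colorNeighborFinset G ξ (ξ v) v)) (b : Fin k) :
    #(colorNeighborFinset G ξ b v) = α b := by
  have hαℚ (i : Fin k) : (0 : ℚ) < α i := Nat.cast_pos.2 (hα i)
  have hge : ∀ i ∈ Finset.univ, α i ≤ #(colorNeighborFinset G ξ i v) := by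
    intro i _
    have hone : (1 : ℚ) ≤ (#(colorNeighborFinset G ξ i v) : ℚ) / α i :=
      ((one_le_div (hαℚ _)).2 (Nat.cast_le.2 hv)).trans (card_colorNeighborFinset_div_le hmin i v)
    exact Nat.cast_le.1 ((one_le_div (hαℚ i)).1 hone)
  have hsum : ∑ i, α i = ∑ i, #(colorNeighborFinset G ξ i v) :=
    (Finset.sum_le_sum hge).antisymm (by rw [sum_card_colorNeighborFinset]; exact hdeg v)
  exact ((Finset.sum_eq_sum_iff_of_le hge).1 hsum b (Finset.mem_univ b)).symm

namespace IsFullClique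

theorem card_colorNeighborFinset_eq (hmin : ∀ ψ, Phi G α ξ ≤ Phi G α ψ)
    (hA : IsFullClique G α ξ a A) (hx : x ∈ A) (b : Fin k) :
    #(colorNeighborFinset G ξ b x) = α b := by
  refine card_colorNeighborFinset_eq_of_le hα hdeg hmin ?_ b
  rw [hA.color_eq x hx, ← hA.card_erase hx]
  exact Finset.card_le_card (hA.erase_subset_colorNeighborFinset hx)

theorem eq_insert_colorNeighborFinset (hmin : ∀ ψ, Phi G α ξ ≤ Phi G α ψ)
    (hA : IsFullClique G α ξ a A) (hx : x ∈ A) :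
    A = insert x (colorNeighborFinset G ξ a x) := by
  rw [← Finset.eq_of_subset_of_card_le (hA.erase_subset_colorNeighborFinset hx)
    (by rw [hA.card_colorNeighborFinset_eq hα hdeg hmin hx, hA.card_erase hx]),
    Finset.insert_erase hx]

theorem phi_update_eq (hmin : ∀ ψ, Phi G α ξ ≤ Phi G α ψ) (hA : IsFullClique G α ξ a A)
    (hx : x ∈ A) (b : Fin k) :
    Phi G α (update ξ x b) = Phi G α ξ := by
  have hαℚ (i : Fin k) : (α i : ℚ) ≠ 0 := Nat.cast_ne_zero.2 (hα i).ne'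
  simp only [phi_update, hA.card_colorNeighborFinset_eq hα hdeg hmin hx, div_self (hαℚ _),
    sub_add_cancel]

end IsFullClique

theorem card_filter_mem_fullCliques_le_one (hmin : ∀ ψ, Phi G α ξ ≤ Phi G α ψ) (x : V) :
    #{s ∈ fullCliques G α ξ | x ∈ s} ≤ 1 := by
  have heq : ∀ s ∈ fullCliques G α ξ, x ∈ s →
      s = insert x (colorNeighborFinset G ξ (ξ x) x) := by
    intro s hs hxs
    obtain ⟨i, hi⟩ := mem_fullCliques.1 hs
    rw [hi.color_eq x hxs]
    exact hi.eq_insert_colorNeighborFinset hα hdeg hmin hxs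
  simp only [Finset.card_le_one, Finset.mem_filter]
  rintro s ⟨hs, hxs⟩ t ⟨ht, hxt⟩
  rw [heq s hs hxs, heq t ht hxt]

end Minimizers

section Optimal

variable {V : Type*} [Fintype V] [DecidableEq V] {G : SimpleGraph V} [DecidableRel G.Adj] {k : ℕ}
  {α : Fin k → ℕ} {ξ : V → Fin k} {a : Fin k} {A : Finset V} {u v w x y : V}

/-- The coloring `ξ` minimizes `Phi` and, subject to this, the number of full cliques. -/
structure IsOptimal (G : SimpleGraph V) [DecidableRel G.Adj] (α : Fin k → ℕ)
    (ξ : V → Fin k) : Prop where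
  phi_le : ∀ ψ, Phi G α ξ ≤ Phi G α ψ
  card_fullCliques_le : ∀ ψ, (∀ φ, Phi G α ψ ≤ Phi G α φ) →
    #(fullCliques G α ξ) ≤ #(fullCliques G α ψ)

theorem exists_isOptimal [NeZero k] (G : SimpleGraph V) [DecidableRel G.Adj] (α : Fin k → ℕ) :
    ∃ ξ, IsOptimal G α ξ := by
  obtain ⟨φ, hφ⟩ := Finite.exists_min (Phi G α)
  obtain ⟨ξ, hξ, hle⟩ := Set.exists_min_image {ψ | ∀ φ, Phi G α ψ ≤ Phi G α φ}
    (fun ψ => #(fullCliques G α ψ)) (Set.toFinite _) ⟨φ, hφ⟩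
  exact ⟨ξ, hξ, hle⟩

namespace IsOptimal

variable (hα : ∀ i, 0 < α i) (hdeg : ∀ v, G.degree v ≤ ∑ i, α i)

include hα hdeg

theorem update_and_exists_isFullClique (h : IsOptimal G α ξ) (hA : IsFullClique G α ξ a A)
    (hx : x ∈ A) (b : Fin k) :
    IsOptimal G α (update ξ x b) ∧ ∃ i, ∃ B, IsFullClique G α (update ξ x b) i B ∧ x ∈ B := by
  have hmin : ∀ ψ, Phi G α (update ξ x b) ≤ Phi G α ψ := by
    rw [hA.phi_update_eq hα hdeg h.phi_le hx]
    exact h.phi_le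
  -- Only full cliques through `x` are affected; there is one before, and at most one afterwards.
  have hone := card_filter_mem_fullCliques_le_one hα hdeg hmin x
  have hpos : 0 < #{s ∈ fullCliques G α ξ | x ∈ s} :=
    Finset.card_pos.2 ⟨A, Finset.mem_filter.2 ⟨mem_fullCliques.2 ⟨a, hA⟩, hx⟩⟩
  have hsplit := Finset.card_filter_add_card_filter_not (s := fullCliques G α ξ) (x ∈ ·)
  have hsplit' :=
    Finset.card_filter_add_card_filter_not (s := fullCliques G α (update ξ x b)) (x ∈ ·)
  rw [filter_notMem_fullCliques_update] at hsplit'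
  have hle := h.card_fullCliques_le _ hmin
  refine ⟨⟨hmin, fun ψ hψ => le_trans (by omega) (h.card_fullCliques_le ψ hψ)⟩, ?_⟩
  obtain ⟨B, hB⟩ : {s ∈ fullCliques G α (update ξ x b) | x ∈ s}.Nonempty :=
    Finset.card_pos.1 (by omega)
  obtain ⟨hB, hxB⟩ := Finset.mem_filter.1 hB
  obtain ⟨i, hB⟩ := mem_fullCliques.1 hB
  exact ⟨i, B, hB, hxB⟩

protected theorem update (h : IsOptimal G α ξ) (hA : IsFullClique G α ξ a A) (hx : x ∈ A)
    (b : Fin k) :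
    IsOptimal G α (update ξ x b) :=
  (h.update_and_exists_isFullClique hα hdeg hA hx b).1

theorem isFullClique_update (h : IsOptimal G α ξ) (hA : IsFullClique G α ξ a A) (hx : x ∈ A)
    (b : Fin k) :
    IsFullClique G α (update ξ x b) b (insert x (colorNeighborFinset G ξ b x)) := by
  obtain ⟨h', i, B, hB, hxB⟩ := h.update_and_exists_isFullClique hα hdeg hA hx b
  obtain rfl : b = i := by rw [← hB.color_eq x hxB, update_self]
  have hBeq := hB.eq_insert_colorNeighborFinset hα hdeg h'.phi_le hxB
  rwa [hBeq, colorNeighborFinset_update_self] at hB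

theorem mem_of_adj (h : IsOptimal G α ξ) (hA : IsFullClique G α ξ a A) (hx : x ∈ A)
    (hxu : G.Adj x u) (hu : ξ u = a) : u ∈ A := by
  rw [hA.eq_insert_colorNeighborFinset hα hdeg h.phi_le hx]
  exact Finset.mem_insert_of_mem (mem_colorNeighborFinset.2 ⟨hxu, hu⟩)

theorem adj_of_color_eq (h : IsOptimal G α ξ) (hA : IsFullClique G α ξ a A) (hx : x ∈ A)
    (hxu : G.Adj x u) (hxv : G.Adj x v) (huv : u ≠ v) (hc : ξ u = ξ v) : G.Adj u v :=
  (h.isFullClique_update hα hdeg hA hx (ξ v)).adj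
    (Finset.mem_insert_of_mem (mem_colorNeighborFinset.2 ⟨hxu, hc⟩))
    (Finset.mem_insert_of_mem (mem_colorNeighborFinset.2 ⟨hxv, rfl⟩)) huv

theorem adj_trans_of_color_eq (h : IsOptimal G α ξ) (hA : IsFullClique G α ξ a A) (hx : x ∈ A)
    (hxu : G.Adj x u) (huv : G.Adj u v) (hvx : v ≠ x) (hc : ξ u = ξ v) : G.Adj x v := by
  have hB := h.isFullClique_update hα hdeg hA hx (ξ v)
  have hvB := (h.update hα hdeg hA hx (ξ v)).mem_of_adj hα hdeg hB
    (Finset.mem_insert_of_mem (mem_colorNeighborFinset.2 ⟨hxu, hc⟩)) huv (update_of_ne hvx ..)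
  exact hB.adj (Finset.mem_insert_self ..) hvB hvx.symm

theorem adj_of_adj_of_adj (h : IsOptimal G α ξ) (hA : IsFullClique G α ξ a A)
    (hu : u ∈ A) (hv : v ∈ A) (huv : u ≠ v) (huy : G.Adj u y) (hvy : G.Adj v y) (hy : ξ y ≠ a)
    (hw : w ∈ A) : G.Adj w y := by
  rcases eq_or_ne w u with rfl | hwu
  · exact huy
  rcases eq_or_ne w v with rfl | hwv
  · exact hvy
  -- Once `u` has the color of `y`, the vertex `y` lies in a full clique, and the rest of `A` is a
  -- component of its color class with a neighbor of `y`.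
  have hyB : y ∈ insert u (colorNeighborFinset G ξ (ξ y) u) :=
    Finset.mem_insert_of_mem (mem_colorNeighborFinset.2 ⟨huy, rfl⟩)
  have hwy : w ≠ y := fun e => hy (e ▸ hA.color_eq w hw)
  refine ((h.update hα hdeg hA hu (ξ y)).adj_trans_of_color_eq hα hdeg
    (h.isFullClique_update hα hdeg hA hu (ξ y)) hyB hvy.symm (hA.adj hv hw hwv.symm) hwy ?_).symm
  rw [update_of_ne huv.symm, update_of_ne hwu, hA.color_eq v hv, hA.color_eq w hw]

end IsOptimal

end Optimal

section Trails

variable {V κ : Type*} {G : SimpleGraph V}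

/-- `y` is adjacent to `w` and to all neighbors of `w` in the color class of `w`. It is used when
these vertices are what is left of a full clique after one of its vertices was recolored. -/
def IsJoinedToBlock (G : SimpleGraph V) (ξ : V → κ) (y w : V) : Prop :=
  ∀ u, ξ u = ξ w → (u = w ∨ G.Adj w u) → G.Adj u y

variable [Fintype V] [DecidableEq V] [DecidableRel G.Adj] {k : ℕ}
  {α : Fin k → ℕ} {ξ : V → Fin k} {a b : Fin k} {A U : Finset V} {t w x y : V}

/-- A state of the process which recolors one vertex of the current full clique `A` at a time,
alternating between the colors `a` and `b`. The vertex `x` is the one recolored last, and `U` is the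
union of the full cliques met before `A`. By `not_isJoinedToBlock`, no vertex outside `U` can lead
back to the rest of one of these. -/
structure IsTrail (G : SimpleGraph V) [DecidableRel G.Adj] (α : Fin k → ℕ) (a b : Fin k)
    (ξ : V → Fin k) (A : Finset V) (x : V) (U : Finset V) : Prop where
  ne : a ≠ b
  isOptimal : IsOptimal G α ξ
  isFullClique : IsFullClique G α ξ a A
  mem : x ∈ A
  notMem : ∀ w ∈ A, w ≠ x → w ∉ U
  eq_of_adj : ∀ y, ξ y = b → ∀ u ∈ A, ∀ v ∈ A, G.Adj u y → G.Adj v y → u = v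
  not_isJoinedToBlock : ∀ w ∈ U, w ≠ x → ∀ y ∉ U, ξ y = a ∨ ξ y = b → ξ y ≠ ξ w →
    ¬ IsJoinedToBlock G ξ y w

namespace IsTrail

theorem not_isJoinedToBlock_of_mem (h : IsTrail G α a b ξ A x U) (ha : 2 ≤ α a) (ht : t ∈ A)
    (hw : w ∈ A) (hwt : w ≠ t) (hy : ξ y = b) :
    ¬ IsJoinedToBlock G (update ξ t b) y w := by
  intro hjoin
  have hA := h.isFullClique
  obtain ⟨u, hu, huw⟩ := Finset.exists_mem_ne (s := A.erase t) (by rw [hA.card_erase ht]; omega) w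
  obtain ⟨hut, huA⟩ := Finset.mem_erase.1 hu
  refine huw (h.eq_of_adj y hy u huA w hw (hjoin u ?_ (.inr (hA.adj hw huA huw.symm)))
    (hjoin w rfl (.inl rfl)))
  rw [update_of_ne hut, update_of_ne hwt, hA.color_eq u huA, hA.color_eq w hw]

section

variable (hα : ∀ i, 0 < α i) (hdeg : ∀ v, G.degree v ≤ ∑ i, α i)

include hα hdeg

theorem notMem_next (h : IsTrail G α a b ξ A x U) (ht : t ∈ A) (htx : t ≠ x)
    (hw : w ∈ colorNeighborFinset G ξ b t) : w ∉ U ∪ A := by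
  obtain ⟨htw, hwb⟩ := mem_colorNeighborFinset.1 hw
  have hta := h.isFullClique.color_eq t ht
  have hwA : w ∉ A := fun hwA => h.ne ((h.isFullClique.color_eq w hwA).symm.trans hwb)
  have hcolor : ξ t ≠ ξ w := by rw [hta, hwb]; exact h.ne
  refine fun hwU => h.not_isJoinedToBlock w ((Finset.mem_union.1 hwU).resolve_right hwA)
    (fun e => hwA (e ▸ h.mem)) t (h.notMem t ht htx) (.inl hta) hcolor ?_
  rintro u huc (rfl | hwu)
  · exact htw.symm
  · exact (h.isOptimal.adj_trans_of_color_eq hα hdeg h.isFullClique ht htw hwu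
      (fun e => hcolor (e ▸ huc)) huc.symm).symm

theorem eq_of_adj_next (h : IsTrail G α a b ξ A x U) (ht : t ∈ A) {y u v : V}
    (hy : update ξ t b y = a)
    (hu : u ∈ insert t (colorNeighborFinset G ξ b t))
    (hv : v ∈ insert t (colorNeighborFinset G ξ b t)) (huy : G.Adj u y) (hvy : G.Adj v y) :
    u = v := by
  have hB := h.isOptimal.isFullClique_update hα hdeg h.isFullClique ht b
  by_contra huv
  have hadj : ∀ w ∈ insert t (colorNeighborFinset G ξ b t), G.Adj w y := fun w hw =>
    (h.isOptimal.update hα hdeg h.isFullClique ht b).adj_of_adj_of_adj hα hdeg hB hu hv huv huy hvy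
      (hy ▸ h.ne) hw
  have hty := hadj t (Finset.mem_insert_self ..)
  have hyA : y ∈ A := h.isOptimal.mem_of_adj hα hdeg h.isFullClique ht hty
    (by rwa [update_of_ne hty.ne'] at hy)
  obtain ⟨z, hzB, hzt⟩ := hB.exists_mem_ne (hα b) t
  obtain ⟨htz, hzb⟩ := mem_colorNeighborFinset.1 (Finset.mem_of_mem_insert_of_ne hzB hzt)
  exact hty.ne (h.eq_of_adj z hzb t ht y hyA htz (hadj z hzB).symm)

theorem isJoinedToBlock_of_update (h : IsTrail G α a b ξ A x U) (ht : t ∈ A) (hw : w ∉ A)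
    (hjoin : IsJoinedToBlock G (update ξ t b) y w) : IsJoinedToBlock G ξ y w := by
  have hwt : w ≠ t := fun e => hw (e ▸ ht)
  intro u huc hu
  have hut : u ≠ t := by
    rintro rfl
    refine hw (h.isOptimal.mem_of_adj hα hdeg h.isFullClique ht (hu.resolve_left hwt.symm).symm ?_)
    rw [← huc, h.isFullClique.color_eq u ht]
  exact hjoin u (by rwa [update_of_ne hut, update_of_ne hwt]) hu

theorem not_isJoinedToBlock_next (h : IsTrail G α a b ξ A x U) (ha : 2 ≤ α a) (ht : t ∈ A)
    (hw : w ∈ U ∪ A) (hwt : w ≠ t) (hy : y ∉ U ∪ A)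
    (hyab : update ξ t b y = b ∨ update ξ t b y = a) (hyw : update ξ t b y ≠ update ξ t b w) :
    ¬ IsJoinedToBlock G (update ξ t b) y w := by
  intro hjoin
  obtain ⟨hyU, hyA⟩ := Finset.notMem_union.1 hy
  have hyt : y ≠ t := fun e => hyA (e ▸ ht)
  rw [update_of_ne hyt] at hyab hyw
  rw [update_of_ne hwt] at hyw
  by_cases hwA : w ∈ A
  · rw [h.isFullClique.color_eq w hwA] at hyw
    exact h.not_isJoinedToBlock_of_mem ha ht hwA hwt (hyab.resolve_right hyw) hjoin
  · exact h.not_isJoinedToBlock w ((Finset.mem_union.1 hw).resolve_right hwA)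
      (fun e => hwA (e ▸ h.mem)) y hyU hyab.symm hyw
      (h.isJoinedToBlock_of_update hα hdeg ht hwA hjoin)

theorem next (h : IsTrail G α a b ξ A x U) (ha : 2 ≤ α a) (ht : t ∈ A) (htx : t ≠ x) :
    IsTrail G α b a (update ξ t b) (insert t (colorNeighborFinset G ξ b t)) t (U ∪ A) where
  ne := h.ne.symm
  isOptimal := h.isOptimal.update hα hdeg h.isFullClique ht b
  isFullClique := h.isOptimal.isFullClique_update hα hdeg h.isFullClique ht b
  mem := Finset.mem_insert_self ..
  notMem _ hw hwt :=
    h.notMem_next hα hdeg ht htx (Finset.mem_of_mem_insert_of_ne hw hwt)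
  eq_of_adj _ hy _ hu _ hv := h.eq_of_adj_next hα hdeg ht hy hu hv
  not_isJoinedToBlock _ hw hwt _ hy := h.not_isJoinedToBlock_next hα hdeg ha ht hw hwt hy

end

theorem exists_card_ge (h : IsTrail G α a b ξ A x U) (hα : ∀ i, 2 ≤ α i)
    (hdeg : ∀ v, G.degree v ≤ ∑ i, α i) (n : ℕ) :
    ∃ a b ξ A x U, IsTrail G α a b ξ A x U ∧ n ≤ #U := by
  induction n with
  | zero => exact ⟨a, b, ξ, A, x, U, h, Nat.zero_le _⟩
  | succ n ih =>
    obtain ⟨a, b, ξ, A, x, U, h, hn⟩ := ih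
    obtain ⟨t, ht, htx⟩ := h.isFullClique.exists_mem_ne (two_pos.trans_le (hα a)) x
    have hnext := h.next (fun i => two_pos.trans_le (hα i)) hdeg (hα a) ht htx
    have hgrow : U ⊂ U ∪ A := (Finset.ssubset_iff_of_subset Finset.subset_union_left).2
      ⟨t, Finset.mem_union_right U ht, h.notMem t ht htx⟩
    exact ⟨_, _, _, _, _, _, hnext, hn.trans_lt (Finset.card_lt_card hgrow)⟩

end IsTrail

theorem not_isTrail (hα : ∀ i, 2 ≤ α i) (hdeg : ∀ v, G.degree v ≤ ∑ i, α i) :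
    ¬ IsTrail G α a b ξ A x U := by
  intro h
  obtain ⟨_, _, _, _, _, U', -, hU'⟩ := h.exists_card_ge hα hdeg (Fintype.card V + 1)
  exact hU'.not_gt (Nat.lt_succ_of_le (Finset.card_le_univ U'))

end Trails

namespace IsOptimal

variable {V : Type*} [Fintype V] [DecidableEq V] {G : SimpleGraph V} [DecidableRel G.Adj] {k : ℕ}
  {α : Fin k → ℕ} {ξ : V → Fin k} {a b : Fin k} {A : Finset V} {u x z : V}

variable (hα : ∀ i, 2 ≤ α i) (hdeg : ∀ v, G.degree v ≤ ∑ i, α i)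

include hα hdeg

theorem exists_color_eq_forall_adj (h : IsOptimal G α ξ) (hA : IsFullClique G α ξ a A)
    (hab : a ≠ b) : ∃ y, ξ y = b ∧ ∀ w ∈ A, G.Adj w y := by
  by_contra! hno
  obtain ⟨x, hx⟩ : A.Nonempty := Finset.card_pos.1 (by rw [hA.isNClique.card_eq]; omega)
  refine not_isTrail (U := ∅) hα hdeg ⟨hab, h, hA, hx, by simp, ?_, by simp⟩
  intro y hy u hu v hv huy hvy
  by_contra huv
  obtain ⟨w, hw, hwy⟩ := hno y hy
  exact hwy (h.adj_of_adj_of_adj (fun i => two_pos.trans_le (hα i)) hdeg hA hu hv huv huy hvy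
    (hy ▸ hab.symm) hw)

theorem adj_of_mem_of_adj (h : IsOptimal G α ξ) (hA : IsFullClique G α ξ a A) (hx : x ∈ A)
    (hz : z ∈ A) (hu : ξ u ≠ a) (hxu : G.Adj x u) : G.Adj z u := by
  have hpos (i : Fin k) : 0 < α i := two_pos.trans_le (hα i)
  obtain ⟨y, hyc, hy⟩ := h.exists_color_eq_forall_adj hα hdeg hA hu.symm
  rcases eq_or_ne y u with rfl | hyu
  · exact hy z hz
  have hyu : G.Adj y u := h.adj_of_color_eq hpos hdeg hA hx (hy x hx) hxu hyu hyc
  exact h.adj_trans_of_color_eq hpos hdeg hA hz (hy z hz) hyu (fun e => hu (e ▸ hA.color_eq z hz))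
    hyc

theorem isClique_neighborSet (h : IsOptimal G α ξ) (hA : IsFullClique G α ξ a A) (hx : x ∈ A) :
    G.IsClique (G.neighborSet x) := by
  have hpos (i : Fin k) : 0 < α i := two_pos.trans_le (hα i)
  intro u hxu v hxv huv
  rw [SimpleGraph.mem_neighborSet] at hxu hxv
  rcases eq_or_ne (ξ v) (ξ u) with hc | hc
  · exact h.adj_of_color_eq hpos hdeg hA hx hxu hxv huv hc.symm
  · exact (h.update hpos hdeg hA hx (ξ u)).adj_of_mem_of_adj hα hdeg
      (h.isFullClique_update hpos hdeg hA hx (ξ u)) (Finset.mem_insert_self ..)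
      (Finset.mem_insert_of_mem (mem_colorNeighborFinset.2 ⟨hxu, rfl⟩))
      (by rwa [update_of_ne hxv.ne']) hxv

theorem isNClique_insert_neighborFinset (h : IsOptimal G α ξ) (hA : IsFullClique G α ξ a A)
    (hx : x ∈ A) :
    G.IsNClique (∑ i, α i + 1) (insert x (G.neighborFinset x)) := by
  have hpos (i : Fin k) : 0 < α i := two_pos.trans_le (hα i)
  have hclique : G.IsNClique (∑ i, α i) (G.neighborFinset x) := by
    refine ⟨by simpa using h.isClique_neighborSet hα hdeg hA hx, ?_⟩
    rw [SimpleGraph.card_neighborFinset_eq_degree, ← sum_card_colorNeighborFinset ξ x]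
    exact Finset.sum_congr rfl fun i _ => hA.card_colorNeighborFinset_eq hpos hdeg h.phi_le hx i
  exact hclique.insert fun u hu => (SimpleGraph.mem_neighborFinset G x u).1 hu

theorem not_isFullClique (h : IsOptimal G α ξ) (hfree : G.CliqueFree (∑ i, α i + 1)) (i : Fin k)
    (s : Finset V) : ¬ IsFullClique G α ξ i s := by
  intro hs
  obtain ⟨x, hx⟩ : s.Nonempty := Finset.card_pos.1 (by rw [hs.isNClique.card_eq]; omega)
  exact hfree _ (h.isNClique_insert_neighborFinset hα hdeg hs hx)

end IsOptimal

/-- Let `G` be a finite simple graph with maximum degree at most `D` and no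
clique on `D+1` vertices, and let `D = α_1 + ⋯ + α_{c+1}` with each `α_i ≥ 2`. Then there is a
coloring `ξ` of `V(G)` with `c+1` colors minimizing `Φ` such that for every color `i` there is
no clique on `α_i + 1` vertices all of color `i`. -/
theorem exists_phi_minimizer_no_large_clique {V : Type*} [Fintype V] [DecidableEq V]
    (G : SimpleGraph V) [DecidableRel G.Adj] (D c : ℕ)
    (α : Fin (c + 1) → ℕ) (hα : ∀ i, 2 ≤ α i) (hsum : ∑ i, α i = D)
    (hdeg : ∀ v : V, G.degree v ≤ D) (hfree : G.CliqueFree (D + 1)) :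
    ∃ ξ : V → Fin (c + 1),
      (∀ ψ : V → Fin (c + 1), Phi G α ξ ≤ Phi G α ψ) ∧
      (∀ i : Fin (c + 1), ¬ ∃ s : Finset V,
        G.IsNClique (α i + 1) s ∧ ∀ v ∈ s, ξ v = i) := by
  subst hsum
  obtain ⟨ξ, hξ⟩ := exists_isOptimal G α
  exact ⟨ξ, hξ.phi_le, fun i ⟨s, hs, hsi⟩ => hξ.not_isFullClique hα hdeg hfree i s ⟨hs, hsi⟩⟩
end
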